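/- arXiv:1801.07982 — 4 statements merged into one kernel-verified Lean document; each statement's English description precedes it below -/
import Mathlib

section
/- Let A be a finite set of nonzero rational numbers with -1 ∉ A, let K be a positive integer with |AA| ≤ K|A|, and let k ≥ 2 be an integer. Then for every subset A' ⊆ A, the multiplicative energy of order k of the shifted subset satisfies E_k(A'+1) ≤ (8k^4)^{kK} |A'|^k. -/
open Finset Pointwise

/-- The multiplicative energy of order `k` of a finite set `B ⊆ ℚ`: the number of
`2k`-tuples `(b₁, …, b_{2k}) ∈ B^{2k}` with `b₁ ⋯ b_k = b_{k+1} ⋯ b_{2k}`. -/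
def multEnergy (k : ℕ) (B : Finset ℚ) : ℕ :=
  (((Fintype.piFinset fun _ : Fin k => B) ×ˢ
      (Fintype.piFinset fun _ : Fin k => B)).filter
      (fun fg => ∏ i, fg.1 i = ∏ i, fg.2 i)).card

/-!
Expanding in characters, the energy of order `k` is the `2k`-th power of an `L^{2k}` norm, and
Hölder's inequality bounds the number of solutions of `b₁ ⋯ b_k = b_{k+1} ⋯ b_{2k}` with
coordinates in prescribed sets by the product of the norms of these sets. Hence, if `j` takes the
same value at two coordinates of every solution in `B`, the squared norm of `B` is at most
`2k²` times the sum of the squared norms of the fibres of `j`.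

For `B = A' + 1` take `j b = v (b - 1)` with a `p`-adic valuation `v`. In an identity
`∏ (1 + xᵢ) = ∏ (1 + yᵢ)` between `p`-integral numbers the largest value of `v` occurs at least
twice, so `j` splits the integral part of `A'`. On the non-integral part `v (b - 1) = v b`, so that
after treating finitely many primes which determine products in `A` up to sign, every solution also
satisfies `∏ (bᵢ - 1) = ∏ (bᵢ' - 1)`; dividing, one gets an identity between the integral numbers
`1 + (b - 1)⁻¹`, to which the same argument applies. Once `v (b - 1)` is constant for all these
primes and the sign of `b - 1` is fixed, a single element is left.

The number of primes needed is the dimension of the exponent vectors of `A`. By Freiman's lemma it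
is less than `K` unless `A` has at most `K (K + 1)` elements, and then the trivial bound suffices.
-/

section Characters

lemma exists_addChar_addCircle_rat_injective :
    ∃ θ : AddChar (AddCircle (1 : ℚ)) Circle, Function.Injective θ := by
  let ι : AddCircle (1 : ℚ) →+ AddCircle (1 : ℝ) :=
    QuotientAddGroup.map _ _ (Rat.castHom ℝ).toAddMonoidHom <| by simp
  have hι : Function.Injective ι := by
    refine (injective_iff_map_eq_zero ι).2 fun x => ?_
    induction x using QuotientAddGroup.induction_on with
    | H q =>
      change ((q : ℝ) : AddCircle (1 : ℝ)) = 0 → (q : AddCircle (1 : ℚ)) = 0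
      simp only [AddCircle.coe_eq_zero_iff, zsmul_one]
      exact fun ⟨n, hn⟩ => ⟨n, by exact_mod_cast hn⟩
  exact ⟨AddCircle.toCircle_addChar.compAddMonoidHom ι,
    (AddCircle.injective_toCircle one_ne_zero).comp hι⟩

variable {G : Type*} [CommGroup G]

lemma exists_monoidHom_circle_apply_ne_one {g : G} (hg : g ≠ 1) :
    ∃ χ : G →* Circle, χ g ≠ 1 ∧ IsOfFinOrder (χ g) := by
  obtain ⟨c, hc⟩ := CharacterModule.exists_character_apply_ne_zero_of_ne_zero
    (A := Additive G) (a := Additive.ofMul g) hg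
  obtain ⟨θ, hθ⟩ := exists_addChar_addCircle_rat_injective
  refine ⟨θ.toMonoidHom.comp (AddMonoidHom.toMultiplicativeRight c), fun h => hc (hθ ?_), ?_⟩
  · rw [θ.map_zero_eq_one]
    exact h
  · have htors (x : AddCircle (1 : ℚ)) : IsOfFinAddOrder x := by
      obtain ⟨q, rfl⟩ := QuotientAddGroup.mk_surjective x
      exact AddCircle.isOfFinAddOrder_iff_exists_rat_eq_div.2 ⟨q, by simp⟩
    exact θ.toMonoidHom.isOfFinOrder (isOfFinOrder_ofAdd_iff.2 (htors _))

lemma exists_monoidHom_family_sum_eq_zero {D : Finset G} (hD : (1 : G) ∉ D) :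
    ∃ (X : Type) (_ : Fintype X) (_ : Nonempty X) (χ : X → G →* Circle),
      ∀ g ∈ D, ∑ x, (χ x g : ℂ) = 0 := by
  classical
  induction D using Finset.induction_on with
  | empty => exact ⟨Unit, inferInstance, inferInstance, 1, by simp⟩
  | insert d D _ ih =>
    simp only [mem_insert, not_or] at hD
    obtain ⟨X, _, _, χ, hχ⟩ := ih hD.2
    obtain ⟨ψ, hψ, hfin⟩ := exists_monoidHom_circle_apply_ne_one (Ne.symm hD.1)
    have : NeZero (orderOf (ψ d)) := ⟨hfin.orderOf_pos.ne'⟩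
    refine ⟨X × Fin (orderOf (ψ d)), inferInstance, inferInstance,
      fun x => χ x.1 * ψ ^ (x.2 : ℕ), fun g hg => ?_⟩
    have hsum : ∑ x : X × Fin (orderOf (ψ d)), ((χ x.1 * ψ ^ (x.2 : ℕ)) g : ℂ) =
        (∑ x, (χ x g : ℂ)) * ∑ m ∈ range (orderOf (ψ d)), (ψ g : ℂ) ^ m := by
      simp [Fintype.sum_prod_type, sum_mul_sum, ← Fin.sum_univ_eq_sum_range]
    rw [hsum]
    rcases mem_insert.1 hg with rfl | hg
    · have hprim : IsPrimitiveRoot (ψ g : ℂ) (orderOf (ψ g)) :=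
        (IsPrimitiveRoot.orderOf (ψ g)).map_of_injective (f := Circle.coeHom) Circle.coe_injective
      rw [hprim.geom_sum_eq_zero, mul_zero]
      exact lt_of_le_of_ne hfin.orderOf_pos fun h => hψ (orderOf_eq_one_iff.1 h.symm)
    · rw [hχ g hg, zero_mul]

variable {R : Type*} [CommMonoid R] [DecidableEq R]

/-- The vectors `(χ x a)ₓ` with `a ∈ T` are pairwise orthogonal, with the square norm that vectors
of unimodular entries have: the orthogonality relations needed to detect equality in `T`. -/
def OrthogonalOn {X : Type*} [Fintype X] (χ : X → MulChar R ℂ) (T : Finset R) : Prop :=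
  ∀ a ∈ T, ∀ b ∈ T, ∑ x, χ x a * star (χ x b) = if a = b then (Fintype.card X : ℂ) else 0

lemma exists_orthogonalOn {T : Finset R} (hT : ∀ a ∈ T, IsUnit a) :
    ∃ (X : Type) (_ : Fintype X) (_ : Nonempty X) (χ : X → MulChar R ℂ),
      OrthogonalOn χ T := by
  classical
  lift T to Finset Rˣ using hT
  obtain ⟨X, _, _, χ, hχ⟩ := exists_monoidHom_family_sum_eq_zero
    (D := ((T ×ˢ T).image fun u => u.1 * u.2⁻¹).erase 1) (notMem_erase _ _)
  refine ⟨X, inferInstance, inferInstance,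
    fun x => MulChar.ofUnitHom (Circle.toUnits.comp (χ x)), ?_⟩
  intro a ha b hb
  obtain ⟨u, hu, rfl⟩ := mem_image.1 ha
  obtain ⟨v, hv, rfl⟩ := mem_image.1 hb
  have hterm x : MulChar.ofUnitHom (Circle.toUnits.comp (χ x)) u *
      star (MulChar.ofUnitHom (Circle.toUnits.comp (χ x)) v) = (χ x (u * v⁻¹) : ℂ) := by
    simp [← Circle.coe_inv_eq_conj]
  simp only [hterm, Units.val_inj]
  split_ifs with huv
  · simp [huv]
  · exact hχ _ (mem_erase.2 ⟨mt mul_inv_eq_one.1 huv, mem_image_of_mem _ (mk_mem_product hu hv)⟩)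

end Characters

section EnergyNorm

lemma sum_prod_le_prod_sum_pow_card {ι X : Type*} [Fintype ι] [Nonempty ι] [Fintype X]
    (u : ι → X → NNReal) :
    ∑ x, ∏ i, u i x ≤
      ∏ i, (∑ x, u i x ^ Fintype.card ι) ^ ((Fintype.card ι : ℝ)⁻¹) := by
  let _ : MeasurableSpace X := ⊤
  have hcard : Fintype.card ι ≠ 0 := Fintype.card_ne_zero
  have h := ENNReal.lintegral_prod_norm_pow_le (μ := MeasureTheory.Measure.count) univ
    (f := fun i x => ((u i x : ENNReal) ^ Fintype.card ι)) (p := fun _ => (Fintype.card ι : ℝ)⁻¹)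
    (fun i _ => (measurable_from_top).aemeasurable) (by simp [hcard]) (fun _ _ => by positivity)
  have hrpow (y : NNReal) : (y : ENNReal) ^ (Fintype.card ι : ℝ)⁻¹ =
      (y ^ (Fintype.card ι : ℝ)⁻¹ : NNReal) := (ENNReal.coe_rpow_of_nonneg y (by positivity)).symm
  simp only [MeasureTheory.lintegral_count, tsum_fintype, ENNReal.pow_rpow_inv_natCast hcard] at h
  simp only [← ENNReal.coe_pow, ← ENNReal.ofNNReal_finsetSum, hrpow] at h
  exact_mod_cast h

variable {R : Type*} [CommMonoid R] [DecidableEq R] {k : ℕ}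

/-- The solutions of `b₁ ⋯ b_k = b_{k+1} ⋯ b_{2k}` whose `s`-th coordinate lies in `S s`; the left
summand of `Fin k ⊕ Fin k` indexes the left-hand side. -/
def prodSolutions (S : Fin k ⊕ Fin k → Finset R) : Finset (Fin k ⊕ Fin k → R) :=
  (Fintype.piFinset S).filter fun f => ∏ i, f (Sum.inl i) = ∏ i, f (Sum.inr i)

lemma mem_prodSolutions {S : Fin k ⊕ Fin k → Finset R} {f : Fin k ⊕ Fin k → R} :
    f ∈ prodSolutions S ↔
      (∀ s, f s ∈ S s) ∧ ∏ i, f (Sum.inl i) = ∏ i, f (Sum.inr i) := by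
  simp [prodSolutions]

/-- The `L^{2k}` norm, on the dual group, of the character sum over `B`, expressed through the
number of solutions of `b₁ ⋯ b_k = b_{k+1} ⋯ b_{2k}` in `B`. -/
noncomputable def energyNorm (k : ℕ) (B : Finset R) : ℝ :=
  (#(prodSolutions fun _ : Fin k ⊕ Fin k => B) : ℝ) ^ ((2 * k : ℕ) : ℝ)⁻¹

lemma energyNorm_nonneg (k : ℕ) (B : Finset R) : 0 ≤ energyNorm k B :=
  Real.rpow_nonneg (Nat.cast_nonneg _) _

lemma energyNorm_pow (hk : k ≠ 0) (B : Finset R) :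
    energyNorm k B ^ (2 * k) = #(prodSolutions fun _ : Fin k ⊕ Fin k => B) :=
  Real.rpow_inv_natCast_pow (Nat.cast_nonneg _) (by omega)

lemma card_mul_card_prodSolutions {X : Type*} [Fintype X] {χ : X → MulChar R ℂ} {U : Finset R}
    (hχ : OrthogonalOn χ (U ^ k)) {S : Fin k ⊕ Fin k → Finset R} (hS : ∀ s, S s ⊆ U) :
    (Fintype.card X : ℂ) * #(prodSolutions S) =
      ∑ x, (∏ i, ∑ a ∈ S (Sum.inl i), χ x a) * ∏ i, star (∑ a ∈ S (Sum.inr i), χ x a) := by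
  have hexpand x : (∏ i, ∑ a ∈ S (Sum.inl i), χ x a) * ∏ i, star (∑ a ∈ S (Sum.inr i), χ x a) =
      ∑ f ∈ Fintype.piFinset S, χ x (∏ i, f (Sum.inl i)) * star (χ x (∏ i, f (Sum.inr i))) := by
    simpa [Fintype.prod_sum_type] using prod_univ_sum S fun s a =>
      Sum.elim (fun _ : Fin k => χ x a) (fun _ : Fin k => star (χ x a)) s
  have hmem (f : Fin k → R) (hf : ∀ i, f i ∈ U) : ∏ i, f i ∈ U ^ k := by
    have h := Set.finsetProd_mem_finsetProd univ (fun _ => (U : Set R)) f fun i _ => hf i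
    rwa [prod_const, card_univ, Fintype.card_fin, ← coe_pow] at h
  have hsum f (hf : f ∈ Fintype.piFinset S) :
      ∑ x, χ x (∏ i, f (Sum.inl i)) * star (χ x (∏ i, f (Sum.inr i))) =
        if ∏ i, f (Sum.inl i) = ∏ i, f (Sum.inr i) then (Fintype.card X : ℂ) else 0 := by
    have hfU s : f s ∈ U := hS s (Fintype.mem_piFinset.1 hf s)
    exact hχ _ (hmem _ fun _ => hfU _) _ (hmem _ fun _ => hfU _)
  simp only [hexpand]
  rw [sum_comm, sum_congr rfl hsum, ← sum_filter, sum_const, nsmul_eq_mul, mul_comm]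
  rfl

lemma card_mul_card_prodSolutions_le {X : Type*} [Fintype X] {χ : X → MulChar R ℂ} {U : Finset R}
    (hχ : OrthogonalOn χ (U ^ k)) {S : Fin k ⊕ Fin k → Finset R} (hS : ∀ s, S s ⊆ U) :
    (Fintype.card X : ℝ) * #(prodSolutions S) ≤ ∑ x, ∏ s, ‖∑ a ∈ S s, χ x a‖ := by
  have h := congrArg norm (card_mul_card_prodSolutions hχ hS)
  rw [norm_mul, Complex.norm_natCast, Complex.norm_natCast] at h
  rw [h]
  refine (norm_sum_le _ _).trans_eq (sum_congr rfl fun x _ => ?_)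
  simp only [norm_mul, norm_prod, norm_star, Fintype.prod_sum_type]

lemma sum_norm_pow_eq_card_mul_energyNorm_pow (hk : k ≠ 0) {X : Type*} [Fintype X]
    {χ : X → MulChar R ℂ} {U : Finset R} (hχ : OrthogonalOn χ (U ^ k)) {B : Finset R}
    (hB : B ⊆ U) :
    ∑ x, ‖∑ a ∈ B, χ x a‖ ^ (2 * k) = Fintype.card X * energyNorm k B ^ (2 * k) := by
  have h := card_mul_card_prodSolutions hχ (S := fun _ => B) fun _ => hB
  rw [energyNorm_pow hk]
  apply Complex.ofReal_injective
  push_cast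
  rw [h]
  refine sum_congr rfl fun x _ => ?_
  rw [prod_const, prod_const, ← mul_pow, card_univ, Fintype.card_fin, RCLike.star_def,
    Complex.mul_conj', pow_mul]

lemma isUnit_of_mem_pow {U : Finset R} (hU : ∀ a ∈ U, IsUnit a) (n : ℕ) :
    ∀ a ∈ U ^ n, IsUnit a := by
  induction n with
  | zero => simp
  | succ n ih =>
    intro c hc
    obtain ⟨a, ha, b, hb, rfl⟩ := mem_mul.1 (pow_succ U n ▸ hc)
    exact (ih a ha).mul (hU b hb)

theorem card_prodSolutions_le_prod_energyNorm (hk : k ≠ 0) {S : Fin k ⊕ Fin k → Finset R}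
    (hS : ∀ s, ∀ a ∈ S s, IsUnit a) :
    (#(prodSolutions S) : ℝ) ≤ ∏ s, energyNorm k (S s) := by
  have : Nonempty (Fin k ⊕ Fin k) := ⟨Sum.inl ⟨0, Nat.pos_of_ne_zero hk⟩⟩
  have hSU s : S s ⊆ univ.biUnion S := subset_biUnion_of_mem S (mem_univ s)
  obtain ⟨X, _, _, χ, hχ⟩ := exists_orthogonalOn (T := univ.biUnion S ^ k) <|
    isUnit_of_mem_pow (fun a ha => let ⟨s, _, hs⟩ := mem_biUnion.1 ha; hS s a hs) k
  have hX : (0 : ℝ) < Fintype.card X := by exact_mod_cast Fintype.card_pos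
  have hcard : Fintype.card (Fin k ⊕ Fin k) = 2 * k := by simp [two_mul]
  have hnorm s : (∑ x, ‖∑ a ∈ S s, χ x a‖ ^ (2 * k)) ^ ((2 * k : ℕ) : ℝ)⁻¹ =
      (Fintype.card X : ℝ) ^ ((2 * k : ℕ) : ℝ)⁻¹ * energyNorm k (S s) := by
    rw [sum_norm_pow_eq_card_mul_energyNorm_pow hk hχ (hSU s),
      Real.mul_rpow hX.le (pow_nonneg (energyNorm_nonneg _ _) _),
      Real.pow_rpow_inv_natCast (energyNorm_nonneg _ _) (by omega)]
  refine le_of_mul_le_mul_left ?_ hX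
  calc (Fintype.card X : ℝ) * #(prodSolutions S)
      ≤ ∑ x, ∏ s, ‖∑ a ∈ S s, χ x a‖ := card_mul_card_prodSolutions_le hχ hSU
    _ ≤ ∏ s, (∑ x, ‖∑ a ∈ S s, χ x a‖ ^ (2 * k)) ^ ((2 * k : ℕ) : ℝ)⁻¹ := by
      have h := sum_prod_le_prod_sum_pow_card fun s x => ‖∑ a ∈ S s, χ x a‖₊
      rw [hcard, ← NNReal.coe_le_coe] at h
      simpa only [NNReal.coe_sum, NNReal.coe_prod, NNReal.coe_rpow, NNReal.coe_pow,
        coe_nnnorm] using h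
    _ = Fintype.card X * ∏ s, energyNorm k (S s) := by
      rw [prod_congr rfl fun s _ => hnorm s, prod_mul_distrib, prod_const, card_univ, hcard,
        Real.rpow_inv_natCast_pow hX.le (by omega)]

lemma multEnergy_eq_energyNorm_pow (hk : k ≠ 0) (B : Finset ℚ) :
    (multEnergy k B : ℝ) = energyNorm k B ^ (2 * k) := by
  rw [energyNorm_pow hk, multEnergy]
  refine congrArg _ (card_equiv (Equiv.sumArrowEquivProdArrow (Fin k) (Fin k) ℚ) fun f => ?_).symm
  simp [mem_prodSolutions, Equiv.sumArrowEquivProdArrow]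

lemma energyNorm_pow_le_sum (hk : k ≠ 0) {ι : Type*} {I : Finset ι}
    {S : ι → Fin k ⊕ Fin k → Finset R} (hS : ∀ i ∈ I, ∀ s, ∀ a ∈ S i s, IsUnit a) {B : Finset R}
    (hB : ∀ f ∈ prodSolutions (fun _ : Fin k ⊕ Fin k => B), ∃ i ∈ I, ∀ s, f s ∈ S i s) :
    energyNorm k B ^ (2 * k) ≤ ∑ i ∈ I, ∏ s, energyNorm k (S i s) := by
  have hcover : prodSolutions (fun _ : Fin k ⊕ Fin k => B) ⊆
      I.biUnion fun i => prodSolutions (S i) := fun f hf => by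
    obtain ⟨i, hi, hfi⟩ := hB f hf
    exact mem_biUnion.2 ⟨i, hi, mem_prodSolutions.2 ⟨hfi, (mem_prodSolutions.1 hf).2⟩⟩
  rw [energyNorm_pow hk]
  calc (#(prodSolutions fun _ : Fin k ⊕ Fin k => B) : ℝ)
      ≤ ∑ i ∈ I, (#(prodSolutions (S i)) : ℝ) := by
        exact_mod_cast (card_le_card hcover).trans card_biUnion_le
    _ ≤ ∑ i ∈ I, ∏ s, energyNorm k (S i s) :=
        sum_le_sum fun i hi => card_prodSolutions_le_prod_energyNorm hk (hS i hi)

lemma energyNorm_union_le (hk : k ≠ 0) {B C : Finset R} (hB : ∀ a ∈ B, IsUnit a)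
    (hC : ∀ a ∈ C, IsUnit a) : energyNorm k (B ∪ C) ≤ energyNorm k B + energyNorm k C := by
  have hsum := add_nonneg (energyNorm_nonneg k B) (energyNorm_nonneg k C)
  refine le_of_pow_le_pow_left₀ (n := 2 * k) (by omega) hsum ?_
  calc energyNorm k (B ∪ C) ^ (2 * k)
      ≤ ∑ ε ∈ Fintype.piFinset fun _ : Fin k ⊕ Fin k => univ,
          ∏ s, energyNorm k (bif ε s then B else C) :=
        energyNorm_pow_le_sum hk (by grind) fun f hf =>
          ⟨fun s => decide (f s ∈ B), Fintype.mem_piFinset.2 fun _ => mem_univ _, fun s => by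
            have := (mem_prodSolutions.1 hf).1 s
            grind⟩
    _ = ∏ _s : Fin k ⊕ Fin k, ∑ b, energyNorm k (bif b then B else C) :=
        (prod_univ_sum _ fun _ b => energyNorm k (bif b then B else C)).symm
    _ = (energyNorm k B + energyNorm k C) ^ (2 * k) := by simp [two_mul]

/-- In every solution of `b₁ ⋯ b_k = b_{k+1} ⋯ b_{2k}` in `B` two coordinates have the same image
under `j`: the condition under which the energy of `B` splits over the fibres of `j`. -/
def RelationsCollide {β : Type*} (k : ℕ) (j : R → β) (B : Finset R) : Prop :=
  ∀ f ∈ prodSolutions (fun _ : Fin k ⊕ Fin k => B), ∃ s t, s ≠ t ∧ j (f s) = j (f t)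

lemma two_mul_choose_two_le (k : ℕ) : ((2 * k).choose 2 : ℝ) ≤ 2 * (k : ℝ) ^ 2 := by
  rw [Nat.cast_choose_two]
  push_cast
  nlinarith [(Nat.cast_nonneg k : (0 : ℝ) ≤ k)]

lemma prod_energyNorm_ite (P : Finset (Fin k ⊕ Fin k)) (B C : Finset R) :
    ∏ s, energyNorm k (if s ∈ P then C else B) =
      energyNorm k C ^ #P * energyNorm k B ^ (2 * k - #P) := by
  simp_rw [apply_ite (energyNorm k)]
  rw [prod_ite, prod_const, prod_const, filter_univ_mem, filter_not, filter_univ_mem,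
    card_univ_sdiff, Fintype.card_sum, Fintype.card_fin, two_mul]

lemma energyNorm_sq_le_sum_fibers (hk : k ≠ 0) {B : Finset R} (hB : ∀ a ∈ B, IsUnit a)
    {β : Type*} [DecidableEq β] {j : R → β} (hj : RelationsCollide k j B) :
    energyNorm k B ^ 2 ≤ 2 * (k : ℝ) ^ 2 *
      ∑ c ∈ B.image j, energyNorm k (B.filter fun b => j b = c) ^ 2 := by
  rcases (energyNorm_nonneg k B).eq_or_lt with h0 | h0
  · rw [← h0, zero_pow two_ne_zero]
    exact mul_nonneg (by positivity) (sum_nonneg fun _ _ => sq_nonneg _)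
  have hcover := energyNorm_pow_le_sum hk (I := powersetCard 2 univ ×ˢ B.image j)
    (S := fun i s => if s ∈ i.1 then B.filter fun b => j b = i.2 else B) (by grind) fun f hf => by
      obtain ⟨s, t, hst, hjst⟩ := hj f hf
      have hfB := (mem_prodSolutions.1 hf).1
      exact ⟨({s, t}, j (f s)), mem_product.2 ⟨mem_powersetCard.2 ⟨subset_univ _, card_pair hst⟩,
        mem_image_of_mem j (hfB s)⟩, fun r => by grind⟩
  have hpairs : ∀ P ∈ powersetCard 2 (univ : Finset (Fin k ⊕ Fin k)),
      ∑ c ∈ B.image j, ∏ s, energyNorm k (if s ∈ P then B.filter fun b => j b = c else B) =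
        (∑ c ∈ B.image j, energyNorm k (B.filter fun b => j b = c) ^ 2) *
          energyNorm k B ^ (2 * k - 2) := fun P hP => by
    simp only [prod_energyNorm_ite, (mem_powersetCard.1 hP).2, sum_mul]
  have hpow : energyNorm k B ^ (2 * k) = energyNorm k B ^ 2 * energyNorm k B ^ (2 * k - 2) := by
    rw [← pow_add, Nat.add_sub_cancel' (by omega)]
  rw [hpow, sum_product, sum_congr rfl hpairs, sum_const, card_powersetCard, card_univ,
    Fintype.card_sum, Fintype.card_fin, ← two_mul, nsmul_eq_mul, ← mul_assoc] at hcover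
  refine (le_of_mul_le_mul_right hcover (pow_pos h0 _)).trans ?_
  exact mul_le_mul_of_nonneg_right (two_mul_choose_two_le k) (sum_nonneg fun _ _ => sq_nonneg _)

/-- Up to the constant `C`, the set `B` has as few product relations of order `k` as a
multiplicatively independent set. The bound is stated for the square of the energy norm since this
is what is additive over fibres. -/
def HasEnergyBound (k : ℕ) (C : ℝ) (B : Finset R) : Prop :=
  energyNorm k B ^ 2 ≤ C * #B

namespace HasEnergyBound

variable {B : Finset R} {C D : ℝ}

lemma mono (h : HasEnergyBound k C B) (hCD : C ≤ D) : HasEnergyBound k D B :=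
  le_trans h (by gcongr)

lemma of_card_le_one (hk : k ≠ 0) (hB : #B ≤ 1) : HasEnergyBound k 1 B := by
  have hcard : #(prodSolutions fun _ : Fin k ⊕ Fin k => B) ≤ #B ^ (2 * k) :=
    (card_filter_le _ _).trans_eq (by simp [two_mul])
  have hle : energyNorm k B ^ (2 * k) ≤ (#B : ℝ) ^ (2 * k) := by
    rw [energyNorm_pow hk]
    exact_mod_cast hcard
  have hnorm := le_of_pow_le_pow_left₀ (by omega) (Nat.cast_nonneg _) hle
  calc energyNorm k B ^ 2 ≤ (#B : ℝ) ^ 2 := pow_le_pow_left₀ (energyNorm_nonneg k B) hnorm 2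
    _ ≤ 1 * #B := by
      rw [one_mul]
      exact_mod_cast (pow_le_of_le_one (Nat.zero_le _) hB two_ne_zero)

lemma of_filter (hk : k ≠ 0) (hB : ∀ a ∈ B, IsUnit a) (p : R → Prop) [DecidablePred p]
    (hpos : HasEnergyBound k C (B.filter p)) (hneg : HasEnergyBound k C (B.filter fun b => ¬ p b)) :
    HasEnergyBound k (2 * C) B := by
  have htri := energyNorm_union_le hk (B := B.filter p) (C := B.filter fun b => ¬ p b)
    (fun a ha => hB a (filter_subset _ _ ha)) (fun a ha => hB a (filter_subset _ _ ha))
  rw [filter_union_filter_not_eq] at htri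
  calc energyNorm k B ^ 2
      ≤ (energyNorm k (B.filter p) + energyNorm k (B.filter fun b => ¬ p b)) ^ 2 :=
        pow_le_pow_left₀ (energyNorm_nonneg k B) htri 2
    _ ≤ 2 * (energyNorm k (B.filter p) ^ 2 + energyNorm k (B.filter fun b => ¬ p b) ^ 2) :=
        add_sq_le
    _ ≤ 2 * (C * #(B.filter p) + C * #(B.filter fun b => ¬ p b)) := by gcongr <;> assumption
    _ = 2 * C * #B := by
        rw [← card_filter_add_card_filter_not p (s := B)]
        push_cast
        ring

lemma of_relationsCollide (hk : k ≠ 0) (hB : ∀ a ∈ B, IsUnit a) {β : Type*} [DecidableEq β]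
    {j : R → β} (hj : RelationsCollide k j B)
    (hfiber : ∀ c, HasEnergyBound k C (B.filter fun b => j b = c)) :
    HasEnergyBound k (2 * (k : ℝ) ^ 2 * C) B := by
  calc energyNorm k B ^ 2
      ≤ 2 * (k : ℝ) ^ 2 * ∑ c ∈ B.image j, energyNorm k (B.filter fun b => j b = c) ^ 2 :=
        energyNorm_sq_le_sum_fibers hk hB hj
    _ ≤ 2 * (k : ℝ) ^ 2 * ∑ c ∈ B.image j, C * #(B.filter fun b => j b = c) := by
        gcongr with c
        exact hfiber c
    _ = 2 * (k : ℝ) ^ 2 * C * #B := by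
        rw [← mul_sum, ← Nat.cast_sum, ← card_eq_sum_card_image]
        ring

lemma multEnergy_le (hk : k ≠ 0) {B : Finset ℚ} (h : HasEnergyBound k C B) :
    (multEnergy k B : ℝ) ≤ (C * #B) ^ k := by
  rw [multEnergy_eq_energyNorm_pow hk, pow_mul]
  exact pow_le_pow_left₀ (sq_nonneg _) h k

end HasEnergyBound

end EnergyNorm

lemma multEnergy_le_of_card_le {k : ℕ} {B : Finset ℚ} {C : ℝ} (hC : #B ≤ C) :
    (multEnergy k B : ℝ) ≤ (C * #B) ^ k :=
  calc (multEnergy k B : ℝ) ≤ (#B ^ k * #B ^ k : ℕ) :=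
        Nat.cast_le.2 ((card_filter_le _ _).trans_eq (by simp))
    _ = (#B * #B) ^ k := by push_cast; ring
    _ ≤ (C * #B) ^ k := by gcongr

/-- Impose hereditary properties `Q i` one after the other, each at the cost of a factor `D`. -/
lemma bound_of_forall_restrict {α ι : Type*} {Φ : ℝ → Finset α → Prop} {Q : ι → Finset α → Prop}
    (hQ : ∀ i, Antitone (Q i)) {C D : ℝ} (hC : 0 ≤ C) (hD : 0 ≤ D) {P : Finset ι} {T : Finset α}
    (hstep : ∀ i ∈ P, ∀ B ⊆ T, ∀ C', 0 ≤ C' → (∀ B' ⊆ B, Q i B' → Φ C' B') → Φ (D * C') B)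
    (h : ∀ B ⊆ T, (∀ i ∈ P, Q i B) → Φ C B) : Φ (D ^ #P * C) T := by
  classical
  induction P using Finset.induction_on generalizing T with
  | empty => simpa using h T subset_rfl
  | insert i P hi ih =>
    rw [card_insert_of_notMem hi, pow_succ', mul_assoc]
    refine hstep i (mem_insert_self _ _) T subset_rfl _ (by positivity) fun B hB hiB => ?_
    refine ih (fun l hl B' hB' => hstep l (mem_insert_of_mem hl) B' (hB'.trans hB))
      fun B' hB' hPB' => h B' (hB'.trans hB) fun l hl => ?_
    rcases mem_insert.1 hl with rfl | hl
    · exact hQ l hB' hiB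
    · exact hPB' l hl

section Valuation

variable {R Γ₀ : Type*} [CommRing R] [LinearOrderedCommMonoidWithZero Γ₀] {w : Valuation R Γ₀}

lemma valuation_prod_one_add_sub_one_lt {ι : Type*} {s : Finset ι} {x : ι → R} {r : Γ₀}
    (hr : 0 < r) (hr1 : r ≤ 1) (hx : ∀ i ∈ s, w (x i) < r) :
    w (∏ i ∈ s, (1 + x i) - 1) < r := by
  classical
  induction s using Finset.induction_on with
  | empty => simpa using hr
  | insert a s ha ih =>
    have hs := ih fun i hi => hx i (mem_insert_of_mem hi)
    have hxa := hx a (mem_insert_self _ _)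
    have hmul : w (x a * (∏ i ∈ s, (1 + x i) - 1)) < r := by
      rw [map_mul]
      exact (mul_le_of_le_one_left' (hxa.le.trans hr1)).trans_lt hs
    rw [prod_insert ha, show (1 + x a) * ∏ i ∈ s, (1 + x i) - 1 =
      x a + ((∏ i ∈ s, (1 + x i) - 1) + x a * (∏ i ∈ s, (1 + x i) - 1)) by ring]
    exact w.map_add_lt hxa (w.map_add_lt hs hmul)

lemma one_add_mul_ne_of_valuation_sub_one_lt {y a b : R} (hy : w y ≤ 1)
    (ha : w (a - 1) < w y) (hb : w (b - 1) < w y) : (1 + y) * a ≠ b := by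
  rintro rfl
  have hmul : w (y * (a - 1)) < w y := by
    rw [map_mul]
    exact (mul_le_of_le_one_left' hy).trans_lt ha
  have hlt := w.map_sub_lt hb (w.map_add_lt ha hmul)
  rw [show (1 + y) * a - 1 - ((a - 1) + y * (a - 1)) = y by ring] at hlt
  exact hlt.false

lemma exists_valuation_eq_of_prod_one_add_eq {ι κ : Type*} [Fintype ι] [Fintype κ]
    [Nonempty (ι ⊕ κ)] {x : ι ⊕ κ → R} (hx0 : ∀ s, w (x s) ≠ 0) (hx1 : ∀ s, w (x s) ≤ 1)
    (h : ∏ i, (1 + x (Sum.inl i)) = ∏ i, (1 + x (Sum.inr i))) :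
    ∃ s t, s ≠ t ∧ w (x s) = w (x t) := by
  classical
  by_contra! hne
  obtain ⟨s, hs⟩ := Finite.exists_max fun s => w (x s)
  have hlt : ∀ t, t ≠ s → w (x t) < w (x s) := fun t ht => (hs t).lt_of_ne (hne t s ht)
  have hpos : 0 < w (x s) := zero_lt_iff.2 (hx0 s)
  rcases s with i | i
  · rw [← mul_prod_erase _ _ (mem_univ i)] at h
    refine one_add_mul_ne_of_valuation_sub_one_lt (hx1 (Sum.inl i)) ?_ ?_ h
    · refine valuation_prod_one_add_sub_one_lt hpos (hx1 _) fun j hj => hlt _ ?_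
      simpa using ne_of_mem_erase hj
    · exact valuation_prod_one_add_sub_one_lt hpos (hx1 _) fun j _ => hlt _ (by simp)
  · rw [← mul_prod_erase univ (fun j => 1 + x (Sum.inr j)) (mem_univ i)] at h
    refine one_add_mul_ne_of_valuation_sub_one_lt (hx1 (Sum.inr i)) ?_ ?_ h.symm
    · refine valuation_prod_one_add_sub_one_lt hpos (hx1 _) fun j hj => hlt _ ?_
      simpa using ne_of_mem_erase hj
    · exact valuation_prod_one_add_sub_one_lt hpos (hx1 _) fun j _ => hlt _ (by simp)

/-- The valuation `w` takes only one value on the shift `B - 1`: the state reached by passing to a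
fibre of `b ↦ w (b - 1)`. -/
def ShiftConstant (w : Valuation R Γ₀) (B : Finset R) : Prop :=
  ∀ b ∈ B, ∀ c ∈ B, w (b - 1) = w (c - 1)

lemma ShiftConstant.antitone : Antitone (ShiftConstant w) :=
  fun _ _ hBC h b hb c hc => h b (hBC hb) c (hBC hc)

lemma shiftConstant_filter (w : Valuation R Γ₀) (B : Finset R) (c : Γ₀) :
    ShiftConstant w (B.filter fun b => w (b - 1) = c) := fun _ hb _ hb' =>
  (mem_filter.1 hb).2.trans (mem_filter.1 hb').2.symm

variable [DecidableEq R] {B : Finset R} {k : ℕ}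

lemma relationsCollide_of_valuation_le_one (hk : k ≠ 0) (hB0 : ∀ b ∈ B, w (b - 1) ≠ 0)
    (hB1 : ∀ b ∈ B, w (b - 1) ≤ 1) : RelationsCollide k (fun b => w (b - 1)) B := by
  intro f hf
  obtain ⟨hfB, hsol⟩ := mem_prodSolutions.1 hf
  have : Nonempty (Fin k ⊕ Fin k) := ⟨Sum.inl ⟨0, by omega⟩⟩
  refine exists_valuation_eq_of_prod_one_add_eq (x := fun s => f s - 1)
    (fun s => hB0 _ (hfB s)) (fun s => hB1 _ (hfB s)) ?_
  simpa using hsol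

lemma relationsCollide_of_shiftConstant (hk : k ≠ 0) (hB : ShiftConstant w B) :
    RelationsCollide k (fun b => w (b - 1)) B := fun f hf =>
  have hfB := (mem_prodSolutions.1 hf).1
  ⟨Sum.inl ⟨0, by omega⟩, Sum.inr ⟨0, by omega⟩, by simp, hB _ (hfB _) _ (hfB _)⟩

lemma valuation_prod_sub_one_eq {f : Fin k ⊕ Fin k → R}
    (hB : (∀ b ∈ B, 1 < w (b - 1)) ∨ ShiftConstant w B)
    (hf : f ∈ prodSolutions fun _ => B) :
    w (∏ i, (f (Sum.inl i) - 1)) = w (∏ i, (f (Sum.inr i) - 1)) := by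
  obtain ⟨hfB, hsol⟩ := mem_prodSolutions.1 hf
  rw [map_prod, map_prod]
  rcases hB with hB | hB
  · have hw s : w (f s - 1) = w (f s) := by
      have hadd := w.map_add_eq_of_lt_right (x := 1) (by simpa using hB _ (hfB s))
      rwa [add_sub_cancel, eq_comm] at hadd
    simp only [hw, ← map_prod, hsol]
  · exact prod_congr rfl fun i _ => hB _ (hfB _) _ (hfB _)

end Valuation

lemma eq_of_abs_eq_abs_of_mul_pos {G : Type*} [Ring G] [LinearOrder G] [IsStrictOrderedRing G]
    {a b : G} (hab : 0 < a * b) (h : |a| = |b|) : a = b := by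
  refine (abs_eq_abs.1 h).resolve_right fun hneg => ?_
  rw [hneg, neg_mul] at hab
  exact (neg_nonpos.2 (mul_self_nonneg b)).not_gt hab

section DeterminingValuations

variable {F Γ₀ ι : Type*} [Field F] [LinearOrderedCommGroupWithZero Γ₀]
  {v : ι → Valuation F Γ₀} {P : Finset ι} {A B : Finset F} {k : ℕ} {C : ℝ}

/-- Dividing `∏ b = ∏ b'` by `∏ (b - 1) = ∏ (b' - 1)` replaces the non-integral `b - 1` by the
integral `(b - 1)⁻¹`, as `b / (b - 1) = 1 + (b - 1)⁻¹`. -/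
lemma relationsCollide_of_one_lt_valuation [DecidableEq F] {w : Valuation F Γ₀} (hk : k ≠ 0)
    (hB : ∀ b ∈ B, 1 < w (b - 1))
    (hprod : ∀ f ∈ prodSolutions (fun _ : Fin k ⊕ Fin k => B),
      ∏ i, (f (Sum.inl i) - 1) = ∏ i, (f (Sum.inr i) - 1)) :
    RelationsCollide k (fun b => w (b - 1)) B := by
  intro f hf
  obtain ⟨hfB, hsol⟩ := mem_prodSolutions.1 hf
  have : Nonempty (Fin k ⊕ Fin k) := ⟨Sum.inl ⟨0, by omega⟩⟩
  have hw s : 1 < w (f s - 1) := hB _ (hfB s)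
  have hne s : f s - 1 ≠ 0 := w.ne_zero_iff.1 (zero_lt_one.trans (hw s)).ne'
  have hdiv s : 1 + (f s - 1)⁻¹ = f s / (f s - 1) := by
    have := hne s
    field_simp
    ring
  obtain ⟨s, t, hst, h⟩ := exists_valuation_eq_of_prod_one_add_eq (w := w)
    (x := fun s => (f s - 1)⁻¹) (fun s => w.ne_zero_iff.2 (inv_ne_zero (hne s)))
    (fun s => by simpa using inv_le_one_of_one_le₀ (hw s).le)
    (by simp only [hdiv, prod_div_distrib, hsol, hprod f hf])
  exact ⟨s, t, hst, by simpa using h⟩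

lemma HasEnergyBound.of_nonintegral_or_shiftConstant [DecidableEq F] (hk : k ≠ 0)
    (h0 : ∀ b ∈ B, b ≠ 0) (h1 : ∀ b ∈ B, b ≠ 1) (hC : 0 ≤ C)
    (h : ∀ B' ⊆ B, (∀ p ∈ P, (∀ b ∈ B', 1 < v p (b - 1)) ∨ ShiftConstant (v p) B') →
      HasEnergyBound k C B') :
    HasEnergyBound k ((4 * (k : ℝ) ^ 2) ^ #P * C) B := by
  have hk1 : (1 : ℝ) ≤ k := by exact_mod_cast Nat.one_le_iff_ne_zero.2 hk
  refine bound_of_forall_restrict (Φ := HasEnergyBound k)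
    (Q := fun p B => (∀ b ∈ B, 1 < v p (b - 1)) ∨ ShiftConstant (v p) B)
    (fun p B' B'' hB => Or.imp (fun h b hb => h b (hB hb)) fun h => h.antitone hB)
    hC (by positivity) (fun p _ B' hB' C' hC' hrestrict => ?_) h
  have hsub : B'.filter (fun b => v p (b - 1) ≤ 1) ⊆ B := (filter_subset _ _).trans hB'
  rw [show 4 * (k : ℝ) ^ 2 * C' = 2 * (2 * (k : ℝ) ^ 2 * C') by ring]
  refine HasEnergyBound.of_filter hk (fun b hb => (h0 b (hB' hb)).isUnit)
    (fun b => v p (b - 1) ≤ 1) ?_ ?_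
  · refine HasEnergyBound.of_relationsCollide hk (fun b hb => (h0 b (hsub hb)).isUnit)
      (relationsCollide_of_valuation_le_one hk
        (fun b hb => (v p).ne_zero_iff.2 (sub_ne_zero.2 (h1 b (hsub hb))))
        fun b hb => (mem_filter.1 hb).2) fun c => ?_
    exact hrestrict _ ((filter_subset _ _).trans (filter_subset _ _))
      (Or.inr (shiftConstant_filter _ _ c))
  · refine (hrestrict _ (filter_subset _ _) (Or.inl fun b hb => ?_)).mono ?_
    · exact not_le.1 (mem_filter.1 hb).2
    · exact le_mul_of_one_le_left hC' (by nlinarith)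

variable [LinearOrder F]

/-- Products of `k` elements of `A` are determined up to sign by their values under the `v p` with
`p ∈ P`. -/
def DeterminesProducts (k : ℕ) (v : ι → Valuation F Γ₀) (P : Finset ι) (A : Finset F) : Prop :=
  ∀ f g : Fin k → F, (∀ i, f i ∈ A) → (∀ i, g i ∈ A) →
    (∀ p ∈ P, v p (∏ i, f i) = v p (∏ i, g i)) → |∏ i, f i| = |∏ i, g i|

variable [IsStrictOrderedRing F]

namespace DeterminesProducts

lemma prod_sub_one_eq (hP : DeterminesProducts k v P A) (hBA : ∀ b ∈ B, b - 1 ∈ A)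
    (hsign : ∀ b ∈ B, ∀ c ∈ B, 0 < (b - 1) * (c - 1))
    (hB : ∀ p ∈ P, (∀ b ∈ B, 1 < v p (b - 1)) ∨ ShiftConstant (v p) B)
    {f : Fin k ⊕ Fin k → F} (hf : f ∈ prodSolutions fun _ => B) :
    ∏ i, (f (Sum.inl i) - 1) = ∏ i, (f (Sum.inr i) - 1) := by
  have hfB := (mem_prodSolutions.1 hf).1
  refine eq_of_abs_eq_abs_of_mul_pos ?_ ?_
  · rw [← prod_mul_distrib]
    exact prod_pos fun i _ => hsign _ (hfB _) _ (hfB _)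
  · exact hP _ _ (fun i => hBA _ (hfB _)) (fun i => hBA _ (hfB _)) fun p hp =>
      valuation_prod_sub_one_eq (hB p hp) hf

lemma card_le_one (hP : DeterminesProducts k v P A) (hk : k ≠ 0) (hBA : ∀ b ∈ B, b - 1 ∈ A)
    (hsign : ∀ b ∈ B, ∀ c ∈ B, 0 < (b - 1) * (c - 1))
    (hconst : ∀ p ∈ P, ShiftConstant (v p) B) : #B ≤ 1 := by
  refine card_le_one_iff.2 fun {b c} hb hc =>
    sub_left_inj.1 (eq_of_abs_eq_abs_of_mul_pos (hsign b hb c hc) ?_)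
  have h := hP (fun _ => b - 1) (fun _ => c - 1) (fun _ => hBA b hb) (fun _ => hBA c hc)
    fun p hp => by simp only [map_prod, hconst p hp b hb c hc]
  simp only [prod_const, card_univ, Fintype.card_fin, abs_pow] at h
  exact (pow_left_inj₀ (abs_nonneg _) (abs_nonneg _) hk).1 h

lemma hasEnergyBound_of_nonintegral_or_shiftConstant (hP : DeterminesProducts k v P A) (hk : k ≠ 0)
    (hBA : ∀ b ∈ B, b - 1 ∈ A) (h0 : ∀ b ∈ B, b ≠ 0)
    (hsign : ∀ b ∈ B, ∀ c ∈ B, 0 < (b - 1) * (c - 1))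
    (hB : ∀ p ∈ P, (∀ b ∈ B, 1 < v p (b - 1)) ∨ ShiftConstant (v p) B) :
    HasEnergyBound k ((2 * (k : ℝ) ^ 2) ^ #P) B := by
  rw [← mul_one (_ ^ #P)]
  refine bound_of_forall_restrict (Q := fun p => ShiftConstant (v p))
    (fun p => ShiftConstant.antitone) zero_le_one (by positivity)
    (fun p hp B' hB' C' _ hrestrict => ?_) fun B' hB' hconst => ?_
  · refine HasEnergyBound.of_relationsCollide hk (fun b hb => (h0 b (hB' hb)).isUnit) ?_
      fun c => hrestrict _ (filter_subset _ _) (shiftConstant_filter (v p) B' c)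
    rcases hB p hp with hnonint | hconst
    · refine relationsCollide_of_one_lt_valuation hk (fun b hb => hnonint b (hB' hb)) fun f hf => ?_
      refine hP.prod_sub_one_eq hBA hsign hB (mem_prodSolutions.2 ?_)
      exact (mem_prodSolutions.1 hf).imp_left fun hf s => hB' (hf s)
    · exact relationsCollide_of_shiftConstant hk (hconst.antitone hB')
  · exact HasEnergyBound.of_card_le_one hk <| hP.card_le_one hk (fun b hb => hBA b (hB' hb))
      (fun b hb c hc => hsign b (hB' hb) c (hB' hc)) hconst

lemma hasEnergyBound_of_fixed_sign (hP : DeterminesProducts k v P A) (hk : k ≠ 0)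
    (hBA : ∀ b ∈ B, b - 1 ∈ A) (h0 : ∀ b ∈ B, b ≠ 0)
    (hsign : ∀ b ∈ B, ∀ c ∈ B, 0 < (b - 1) * (c - 1)) :
    HasEnergyBound k ((8 * (k : ℝ) ^ 4) ^ #P) B := by
  have h1 : ∀ b ∈ B, b ≠ 1 := fun b hb hb1 => by simpa [hb1] using hsign b hb b hb
  rw [show 8 * (k : ℝ) ^ 4 = 4 * (k : ℝ) ^ 2 * (2 * (k : ℝ) ^ 2) by ring, mul_pow]
  exact HasEnergyBound.of_nonintegral_or_shiftConstant hk h0 h1 (by positivity) fun B' hB' =>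
    hP.hasEnergyBound_of_nonintegral_or_shiftConstant hk (fun b hb => hBA b (hB' hb))
      (fun b hb => h0 b (hB' hb)) fun b hb c hc => hsign b (hB' hb) c (hB' hc)

theorem hasEnergyBound (hP : DeterminesProducts k v P A) (hk : k ≠ 0) (hBA : ∀ b ∈ B, b - 1 ∈ A)
    (h0 : ∀ b ∈ B, b ≠ 0) (h1 : ∀ b ∈ B, b ≠ 1) :
    HasEnergyBound k (2 * (8 * (k : ℝ) ^ 4) ^ #P) B := by
  refine HasEnergyBound.of_filter hk (fun b hb => (h0 b hb).isUnit) (fun b => 1 < b) ?_ ?_ <;>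
    refine hP.hasEnergyBound_of_fixed_sign hk (fun b hb => hBA b (filter_subset _ _ hb))
      (fun b hb => h0 b (filter_subset _ _ hb)) fun b hb c hc => ?_
  · exact mul_pos (sub_pos.2 (mem_filter.1 hb).2) (sub_pos.2 (mem_filter.1 hc).2)
  · obtain ⟨hbB, hb⟩ := mem_filter.1 hb
    obtain ⟨hcB, hc⟩ := mem_filter.1 hc
    exact mul_pos_of_neg_of_neg (sub_neg.2 ((not_lt.1 hb).lt_of_ne (h1 b hbB)))
      (sub_neg.2 ((not_lt.1 hc).lt_of_ne (h1 c hcB)))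

end DeterminesProducts

end DeterminingValuations

section Freiman

open Module

lemma image_eq_insert_image_filter_lt {α β : Type*} [LinearOrder β] {s : Finset α} {f : α → β}
    {x : α} (hx : x ∈ s) (hmin : ∀ a ∈ s, f x ≤ f a) :
    f '' (s : Set α) = insert (f x) (f '' (s.filter fun a => f x < f a : Finset α)) := by
  ext u
  constructor
  · rintro ⟨a, ha, rfl⟩
    exact (hmin a ha).eq_or_lt.imp Eq.symm fun h => ⟨a, by simpa using ⟨ha, h⟩, rfl⟩
  · rintro (rfl | ⟨a, ha, rfl⟩)
    exacts [⟨x, hx, rfl⟩, ⟨a, filter_subset _ _ ha, rfl⟩]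

lemma card_filter_eq_add_card_filter_lt {α β : Type*} [LinearOrder β] {s : Finset α} {f : α → β}
    {x : α} (hmin : ∀ a ∈ s, f x ≤ f a) :
    #(s.filter fun a => f a = f x) + #(s.filter fun a => f x < f a) = #s := by
  rw [filter_congr fun a ha => (hmin a ha).lt_iff_ne']
  exact card_filter_add_card_filter_not _

lemma card_mul_of_injOn {M V : Type*} [Mul M] [DecidableEq M] [Add V] [IsLeftCancelAdd V]
    {F Z : Finset M} {φ : M → V} {u : V} (hreg : ∀ z ∈ Z, IsRightRegular z)
    (hφ : ∀ g ∈ F, ∀ z ∈ Z, φ (g * z) = u + φ z) (hinj : Set.InjOn φ Z) :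
    #(F * Z) = #F * #Z := by
  refine card_mul_iff.2 ?_
  rintro ⟨g, z⟩ ⟨hg, hz⟩ ⟨g', z'⟩ ⟨hg', hz'⟩ (h : g * z = g' * z')
  obtain rfl : z = z' := hinj hz hz' <| add_left_cancel (a := u) <| by
    rw [← hφ g hg z hz, h, hφ g' hg' z' hz']
  rw [hreg z hz h]

variable {𝕜 V : Type*} [DivisionRing 𝕜] [AddCommGroup V] [LinearOrder V] [IsOrderedAddMonoid V]
  [Module 𝕜 V]

/-- If `x + y = y₁ + y₂` with `y₁, y₂ > x`, then `y₁, y₂ < y` and `y - x = (y₁ - x) + (y₂ - x)`: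
the smallest direction not yet spanned comes from a `y` with `x + y ∉ Y + Y`. -/
lemma finrank_vectorSpan_insert_le_card_filter_add_notMem {x : V} {Y : Finset V}
    (hY : ∀ y ∈ Y, x < y) :
    finrank 𝕜 (vectorSpan 𝕜 (insert x (Y : Set V))) ≤ #(Y.filter fun y => x + y ∉ Y + Y) := by
  classical
  set S := Y.filter fun y => x + y ∉ Y + Y
  set W := Submodule.span 𝕜 ((S.image fun y => y - x : Finset V) : Set V)
  have hmem : ∀ y ∈ Y, y - x ∈ W := by
    by_contra! hbad
    obtain ⟨y, hy, hmin⟩ := exists_min_image (Y.filter fun y => y - x ∉ W) id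
      (filter_nonempty_iff.2 hbad)
    obtain ⟨hyY, hyW⟩ := mem_filter.1 hy
    have hsmall : ∀ z ∈ Y, z < y → z - x ∈ W := fun z hz hzy => by
      by_contra h
      exact (hmin z (mem_filter.2 ⟨hz, h⟩)).not_gt hzy
    have hsum : x + y ∈ Y + Y := by
      by_contra h
      exact hyW (Submodule.subset_span (mem_image_of_mem _ (mem_filter.2 ⟨hyY, h⟩)))
    obtain ⟨y₁, hy₁, y₂, hy₂, h12⟩ := mem_add.1 hsum
    have hlt₁ : y₁ < y := lt_of_not_ge fun h => (add_lt_add_of_lt_of_le (hY y₂ hy₂) h).ne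
      (by rw [← h12, add_comm])
    have hlt₂ : y₂ < y := lt_of_not_ge fun h => (add_lt_add_of_lt_of_le (hY y₁ hy₁) h).ne h12.symm
    refine hyW ?_
    rw [show y - x = (y₁ - x) + (y₂ - x) by rw [eq_sub_of_add_eq' h12.symm]; abel]
    exact W.add_mem (hsmall y₁ hy₁ hlt₁) (hsmall y₂ hy₂ hlt₂)
  have hspan : vectorSpan 𝕜 (insert x (Y : Set V)) ≤ W := by
    rw [vectorSpan_eq_span_vsub_set_right 𝕜 (Set.mem_insert x _), Submodule.span_le]
    rintro _ ⟨y, rfl | hy, rfl⟩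
    · simp
    · exact hmem y hy
  calc finrank 𝕜 (vectorSpan 𝕜 (insert x (Y : Set V))) ≤ finrank 𝕜 W := Submodule.finrank_mono hspan
    _ ≤ #(S.image fun y => y - x) := finrank_span_finset_le_card _
    _ ≤ #S := card_image_le

variable {M : Type*} [Mul M] [DecidableEq M] {A : Finset M} {φ : M → V} {x : M}

lemma card_filter_mul_add_card_mul_self_le (hreg : ∀ a ∈ A, IsRightRegular a)
    (hφ : ∀ a ∈ A, ∀ b ∈ A, φ (a * b) = φ a + φ b) (hx : x ∈ A) (hmin : ∀ a ∈ A, φ x ≤ φ a) :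
    #(A.filter fun a => φ a = φ x) * (finrank 𝕜 (vectorSpan 𝕜 (φ '' (A : Set M))) + 1) +
      #((A.filter fun a => φ x < φ a) * A.filter fun a => φ x < φ a) ≤ #(A * A) := by
  set F := A.filter fun a => φ a = φ x
  set B := A.filter fun a => φ x < φ a with hB
  set Y := B.image φ
  have hxY : ∀ y ∈ Y, φ x < y := forall_mem_image.2 fun b hb => (mem_filter.1 hb).2
  set S := Y.filter fun y => φ x + y ∉ Y + Y
  have hdim : finrank 𝕜 (vectorSpan 𝕜 (φ '' (A : Set M))) ≤ #S := by
    rw [image_eq_insert_image_filter_lt hx hmin, ← hB, ← coe_image]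
    exact finrank_vectorSpan_insert_le_card_filter_add_notMem hxY
  obtain ⟨Z, hZA, hinj, hZS⟩ := exists_subset_injOn_image_eq_of_surjOn (f := φ) A
    (insert (φ x) S) (by
      rw [Set.SurjOn, coe_insert, image_eq_insert_image_filter_lt hx hmin, ← hB, ← coe_image]
      exact Set.insert_subset_insert (filter_subset _ _))
  have hcardZ : #Z = #S + 1 := by
    rw [← card_image_of_injOn hinj, hZS, card_insert_of_notMem]
    exact fun h => (hxY _ (filter_subset _ _ h)).false
  have hφFZ : ∀ g ∈ F, ∀ z ∈ Z, φ (g * z) = φ x + φ z := fun g hg z hz => by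
    rw [hφ g (filter_subset _ _ hg) z (hZA hz), (mem_filter.1 hg).2]
  have hdisj : Disjoint (F * Z) (B * B) := by
    refine disjoint_left.2 fun q hq hq' => ?_
    obtain ⟨g, hg, z, hz, rfl⟩ := mem_mul.1 hq
    obtain ⟨a, ha, b, hb, hab⟩ := mem_mul.1 hq'
    have hsum : φ a + φ b = φ x + φ z := by
      rw [← hφFZ g hg z hz, ← hab, hφ a (filter_subset _ _ ha) b (filter_subset _ _ hb)]
    rcases mem_insert.1 (hZS ▸ mem_image_of_mem φ hz) with hzx | hzS
    · exact (add_lt_add (mem_filter.1 ha).2 (mem_filter.1 hb).2).ne (hzx ▸ hsum.symm)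
    · exact (mem_filter.1 hzS).2 <|
        hsum ▸ add_mem_add (mem_image_of_mem _ ha) (mem_image_of_mem _ hb)
  calc _ ≤ #F * (#S + 1) + #(B * B) := by gcongr
    _ = #(F * Z ∪ B * B) := by
        rw [card_union_of_disjoint hdisj, ← hcardZ,
          card_mul_of_injOn (fun z hz => hreg z (hZA hz)) hφFZ hinj]
    _ ≤ #(A * A) := card_le_card <| union_subset (mul_subset_mul (filter_subset _ _) hZA)
      (mul_subset_mul (filter_subset _ _) (filter_subset _ _))

lemma card_add_card_mul_self_le_of_notMem_affineSpan (hreg : ∀ a ∈ A, IsLeftRegular a)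
    (hφ : ∀ a ∈ A, ∀ b ∈ A, φ (a * b) = φ a + φ b) (hx : x ∈ A) (hmin : ∀ a ∈ A, φ x ≤ φ a)
    (hspan : φ x ∉ affineSpan 𝕜 (φ '' (A.filter fun a => φ x < φ a : Finset M))) :
    #A + #((A.filter fun a => φ x < φ a) * A.filter fun a => φ x < φ a) ≤ #(A * A) := by
  set B := A.filter fun a => φ x < φ a
  have hdisj : Disjoint (A.image (x * ·)) (B * B) := by
    refine disjoint_left.2 fun q hq hq' => ?_
    obtain ⟨a, ha, rfl⟩ := mem_image.1 hq
    obtain ⟨b, hb, c, hc, hbc⟩ := mem_mul.1 hq'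
    have hsum : φ b + φ c = φ x + φ a := by
      rw [← hφ b (filter_subset _ _ hb) c (filter_subset _ _ hc), hbc, hφ x hx a ha]
    rcases (hmin a ha).eq_or_lt with hax | hax
    · exact (add_lt_add (mem_filter.1 hb).2 (mem_filter.1 hc).2).ne (by rw [hsum, ← hax])
    · refine hspan ?_
      rw [show φ x = (φ b - φ a) + φ c by rw [eq_sub_of_add_eq hsum.symm]; abel]
      refine AffineSubspace.vadd_mem_of_mem_direction ?_ (mem_affineSpan 𝕜 ⟨c, hc, rfl⟩)
      rw [direction_affineSpan]
      exact vsub_mem_vectorSpan 𝕜 ⟨b, hb, rfl⟩ ⟨a, mem_filter.2 ⟨ha, hax⟩, rfl⟩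
  calc #A + #(B * B) = #(A.image (x * ·) ∪ B * B) := by
        rw [card_union_of_disjoint hdisj, card_image_of_injective _ (hreg x hx)]
    _ ≤ #(A * A) := card_le_card <| union_subset (image_subset_iff.2 fun a ha => mul_mem_mul hx ha)
        (mul_subset_mul (filter_subset _ _) (filter_subset _ _))

theorem succ_mul_card_le_card_mul_self_add (hreg : ∀ a ∈ A, IsRegular a)
    (hφ : ∀ a ∈ A, ∀ b ∈ A, φ (a * b) = φ a + φ b) {t : ℕ}
    (hfiber : ∀ u, #(A.filter fun a => φ a = u) ≤ t) {D : ℕ}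
    (hD : D ≤ finrank 𝕜 (vectorSpan 𝕜 (φ '' (A : Set M)))) :
    (D + 1) * #A ≤ #(A * A) + t * (D + 1).choose 2 := by
  induction A using Finset.strongInduction generalizing D with
  | H A ih =>
  rcases A.eq_empty_or_nonempty with rfl | hne
  · simp
  obtain ⟨x, hx, hmin⟩ := exists_min_image A φ hne
  set F := A.filter fun a => φ a = φ x
  set B := A.filter fun a => φ x < φ a
  have hBA : B ⊆ A := filter_subset _ _
  have hcard : #F + #B = #A := card_filter_eq_add_card_filter_lt hmin
  have hins := image_eq_insert_image_filter_lt hx hmin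
  have hind {E : ℕ} (hE : E ≤ finrank 𝕜 (vectorSpan 𝕜 (φ '' (B : Set M)))) :
      (E + 1) * #B ≤ #(B * B) + t * (E + 1).choose 2 :=
    ih B (filter_ssubset.2 ⟨x, hx, lt_irrefl _⟩) (fun a ha => hreg a (hBA ha))
      (fun a ha b hb => hφ a (hBA ha) b (hBA hb))
      (fun u => (card_le_card (filter_subset_filter _ hBA)).trans (hfiber u)) hE
  by_cases hspan : φ x ∈ affineSpan 𝕜 (φ '' (B : Set M))
  · have hnew :=
      card_filter_mul_add_card_mul_self_le (𝕜 := 𝕜) (fun a ha => (hreg a ha).2) hφ hx hmin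
    have hBD := hind (hD.trans_eq (by rw [hins, vectorSpan_insert_eq_vectorSpan hspan]))
    calc (D + 1) * #A = #F * (D + 1) + (D + 1) * #B := by rw [← hcard]; ring
      _ ≤ #F * (finrank 𝕜 (vectorSpan 𝕜 (φ '' (A : Set M))) + 1) +
          (#(B * B) + t * (D + 1).choose 2) := by gcongr
      _ ≤ _ := by rw [← add_assoc]; gcongr
  · have hnew := card_add_card_mul_self_le_of_notMem_affineSpan (fun a ha => (hreg a ha).1) hφ hx
      hmin hspan
    rcases D with _ | E
    · simpa using (Nat.le_add_right _ _).trans hnew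
    · have hE := hD.trans (hins ▸ finrank_vectorSpan_insert_le_set 𝕜 (φ '' (B : Set M)) (φ x))
      calc (E + 1 + 1) * #A = (E + 1) * #F + (E + 1) * #B + #A := by rw [← hcard]; ring
        _ ≤ (E + 1) * t + (#(B * B) + t * (E + 1).choose 2) + #A := by
          gcongr
          exacts [hfiber _, hind (Nat.succ_le_succ_iff.1 hE)]
        _ = #A + #(B * B) + t * (E + 1 + 1).choose 2 := by
          rw [Nat.choose_succ_succ' (E + 1) 1, Nat.choose_one_right]
          ring
        _ ≤ _ := by gcongr

end Freiman

section PrimeValuations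

open Module WithZero

lemma exists_finset_card_le_finrank_forall_eq_zero {ι K V : Type*} [Field K] [AddCommGroup V]
    [Module K V] [FiniteDimensional K V] {f : ι → Dual K V} (hf : ∀ u, (∀ i, f i u = 0) → u = 0) :
    ∃ P : Finset ι, #P ≤ finrank K V ∧ ∀ u, (∀ p ∈ P, f p u = 0) → u = 0 := by
  classical
  obtain ⟨T, hT, hcard, hspan, -⟩ := Submodule.exists_finset_span_eq_linearIndepOn K (Set.range f)
  obtain ⟨P, -, hinj, rfl⟩ := exists_subset_injOn_image_eq_of_surjOn Set.univ T
    (by rwa [Set.SurjOn, Set.image_univ])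
  refine ⟨P, ?_, fun u hu => hf u fun i => ?_⟩
  · rw [← card_image_of_injOn hinj, hcard]
    calc finrank K (Submodule.span K (Set.range f))
      _ ≤ finrank K (Dual K V) := Submodule.finrank_le _
      _ = finrank K V := Subspace.dual_finrank_eq
  · have hle : Submodule.span K (P.image f : Set (Dual K V)) ≤ LinearMap.ker (Dual.eval K V u) :=
      Submodule.span_le.2 <| by simpa [Set.subset_def] using hu
    exact hle (hspan ▸ Submodule.subset_span ⟨i, rfl⟩)

/-- The family of the `p`-adic valuations on `ℚ`. Its index type is spelled out because the
lexicographic order on functions is not found on the type synonym `Nat.Primes`. -/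
noncomputable def primeValuation (p : {p : ℕ // p.Prime}) : Valuation ℚ ℤᵐ⁰ :=
  haveI : Fact p.1.Prime := ⟨p.2⟩
  Rat.padicValuation p.1

lemma den_eq_one_of_forall_primeValuation_le_one {c : ℚ} (h : ∀ p, primeValuation p c ≤ 1) :
    c.den = 1 :=
  Nat.eq_one_iff_not_exists_prime_dvd.2 fun p hp =>
    haveI : Fact p.Prime := ⟨hp⟩
    Rat.padicValuation_le_one_iff.1 (h ⟨p, hp⟩)

lemma abs_eq_one_of_forall_primeValuation_eq_one {c : ℚ} (h : ∀ p, primeValuation p c = 1) :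
    |c| = 1 := by
  have hc : c ≠ 0 := fun hc => by simpa [hc] using h ⟨2, Nat.prime_two⟩
  have hden : c.den = 1 := den_eq_one_of_forall_primeValuation_le_one fun p => (h p).le
  have hnum : c.num.natAbs = 1 := by
    rw [← Rat.den_inv_of_ne_zero hc]
    exact den_eq_one_of_forall_primeValuation_le_one fun p => by rw [map_inv₀, h p, inv_one]
  rw [Rat.abs_def, hden, hnum]
  simp

/-- The vector of the negated exponents of the primes in a nonzero rational, with the junk value `0`
at `0`. The lexicographic order makes the ambient space an ordered group. -/
noncomputable def valuationVector (a : ℚ) : Lex ({p : ℕ // p.Prime} → ℚ) :=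
  toLex fun p => ((log (primeValuation p a) : ℤ) : ℚ)

lemma ofLex_valuationVector (a : ℚ) (p : {p : ℕ // p.Prime}) :
    ofLex (valuationVector a) p = (log (primeValuation p a) : ℤ) :=
  rfl

lemma valuationVector_mul {a b : ℚ} (ha : a ≠ 0) (hb : b ≠ 0) :
    valuationVector (a * b) = valuationVector a + valuationVector b := by
  refine ofLex_inj.1 (funext fun p => ?_)
  rw [ofLex_add, Pi.add_apply]
  simp only [ofLex_valuationVector]
  rw [map_mul, log_mul ((primeValuation p).ne_zero_iff.2 ha) ((primeValuation p).ne_zero_iff.2 hb),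
    Int.cast_add]

lemma valuationVector_prod {ι : Type*} {s : Finset ι} {f : ι → ℚ} (hf : ∀ i ∈ s, f i ≠ 0) :
    valuationVector (∏ i ∈ s, f i) = ∑ i ∈ s, valuationVector (f i) := by
  classical
  induction s using Finset.induction_on with
  | empty => exact ofLex_inj.1 (funext fun p => by
      rw [prod_empty, ofLex_valuationVector, map_one, log_one]
      exact Int.cast_zero)
  | insert i s hi ih =>
    rw [forall_mem_insert] at hf
    rw [prod_insert hi, sum_insert hi, valuationVector_mul hf.1 (prod_ne_zero_iff.2 hf.2), ih hf.2]

lemma abs_eq_abs_of_valuationVector_eq {a b : ℚ} (ha : a ≠ 0) (hb : b ≠ 0)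
    (h : valuationVector a = valuationVector b) : |a| = |b| := by
  rw [← div_eq_one_iff_eq (abs_ne_zero.2 hb), ← abs_div]
  refine abs_eq_one_of_forall_primeValuation_eq_one fun p => ?_
  have hlog : log (primeValuation p a) = log (primeValuation p b) := by
    have hp := congrFun (ofLex_inj.2 h) p
    rwa [ofLex_valuationVector, ofLex_valuationVector, Int.cast_inj] at hp
  have hb' := (primeValuation p).ne_zero_iff.2 hb
  rw [map_div₀, div_eq_one_iff_eq hb', ← exp_log hb', ← hlog,
    exp_log ((primeValuation p).ne_zero_iff.2 ha)]

variable {A : Finset ℚ}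

lemma card_filter_valuationVector_eq_le_two (hA : 0 ∉ A) (u : Lex ({p : ℕ // p.Prime} → ℚ)) :
    #(A.filter fun a => valuationVector a = u) ≤ 2 := by
  rcases (A.filter fun a => valuationVector a = u).eq_empty_or_nonempty with h | ⟨x, hx⟩
  · simp [h]
  refine (card_le_card (t := {x, -x}) fun a ha => ?_).trans card_le_two
  obtain ⟨hxA, hxu⟩ := mem_filter.1 hx
  obtain ⟨haA, hau⟩ := mem_filter.1 ha
  rw [mem_insert, mem_singleton]
  exact abs_eq_abs.1 (abs_eq_abs_of_valuationVector_eq (ne_of_mem_of_not_mem haA hA)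
    (ne_of_mem_of_not_mem hxA hA) (hau.trans hxu.symm))

/-- The multiplicative dimension of a finite set of nonzero rationals: the least dimension of a
subspace of which a translate contains all the exponent vectors. -/
noncomputable def multDim (A : Finset ℚ) : ℕ :=
  finrank ℚ (vectorSpan ℚ (valuationVector '' (A : Set ℚ)))

lemma multDim_lt (hA : 0 ∉ A) {K : ℕ} (hAA : #(A * A) ≤ K * #A) (hcard : K * (K + 1) < #A) :
    multDim A < K := by
  by_contra! hK
  have hreg a (ha : a ∈ A) : IsRegular a := .of_ne_zero (ne_of_mem_of_not_mem ha hA)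
  have hfreiman : (K + 1) * #A ≤ #(A * A) + 2 * (K + 1).choose 2 :=
    succ_mul_card_le_card_mul_self_add hreg
      (fun a ha b hb => valuationVector_mul (ne_of_mem_of_not_mem ha hA)
        (ne_of_mem_of_not_mem hb hA))
      (card_filter_valuationVector_eq_le_two hA) hK
  have hchoose := Nat.add_one_mul_choose_eq K 1
  rw [Nat.choose_one_right] at hchoose
  linarith

lemma valuationVector_prod_sub_prod_mem_vectorSpan {ι : Type*} {s : Finset ι} (hA : 0 ∉ A)
    {f g : ι → ℚ} (hf : ∀ i ∈ s, f i ∈ A) (hg : ∀ i ∈ s, g i ∈ A) :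
    valuationVector (∏ i ∈ s, f i) - valuationVector (∏ i ∈ s, g i) ∈
      vectorSpan ℚ (valuationVector '' (A : Set ℚ)) := by
  rw [valuationVector_prod fun i hi => ne_of_mem_of_not_mem (hf i hi) hA,
    valuationVector_prod fun i hi => ne_of_mem_of_not_mem (hg i hi) hA, ← sum_sub_distrib]
  exact sum_mem fun i hi => vsub_mem_vectorSpan ℚ ⟨_, hf i hi, rfl⟩ ⟨_, hg i hi, rfl⟩

lemma exists_determinesProducts (k : ℕ) (hA : 0 ∉ A) :
    ∃ P, #P ≤ multDim A ∧ DeterminesProducts k primeValuation P A := by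
  have : FiniteDimensional ℚ (vectorSpan ℚ (valuationVector '' (A : Set ℚ))) :=
    finiteDimensional_vectorSpan_of_finite ℚ (A.finite_toSet.image _)
  let coord (p : {p : ℕ // p.Prime}) : Dual ℚ (vectorSpan ℚ (valuationVector '' (A : Set ℚ))) :=
    (LinearMap.proj p ∘ₗ (ofLexLinearEquiv ℚ _).toLinearMap).domRestrict _
  obtain ⟨P, hcard, hP⟩ := exists_finset_card_le_finrank_forall_eq_zero (f := coord)
    fun u hu => Subtype.ext (ofLex_inj.1 (funext hu))
  refine ⟨P, hcard, fun f g hf hg hfg => ?_⟩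
  refine abs_eq_abs_of_valuationVector_eq
    (prod_ne_zero_iff.2 fun i _ => ne_of_mem_of_not_mem (hf i) hA)
    (prod_ne_zero_iff.2 fun i _ => ne_of_mem_of_not_mem (hg i) hA) (sub_eq_zero.1 ?_)
  refine congrArg Subtype.val <| hP ⟨_, valuationVector_prod_sub_prod_mem_vectorSpan hA
    (fun i _ => hf i) fun i _ => hg i⟩ fun p hp => ?_
  change ofLex (valuationVector _) p - ofLex (valuationVector _) p = 0
  rw [ofLex_valuationVector, ofLex_valuationVector, hfg p hp, sub_self]

end PrimeValuations

lemma mul_add_one_le_four_pow (n : ℕ) : n * (n + 1) ≤ 4 ^ n :=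
  calc n * (n + 1) ≤ 2 ^ n * 2 ^ n := Nat.mul_le_mul Nat.lt_two_pow_self.le Nat.lt_two_pow_self
    _ = 4 ^ n := by rw [← mul_pow]; norm_num

lemma two_mul_pow_le_pow {R : Type*} [Semiring R] [PartialOrder R] [IsOrderedRing R] {x : R}
    (hx : 2 ≤ x) {m n : ℕ} (hmn : m < n) : 2 * x ^ m ≤ x ^ n :=
  have hx1 : 1 ≤ x := one_le_two.trans hx
  calc 2 * x ^ m ≤ x * x ^ m := mul_le_mul_of_nonneg_right hx (pow_nonneg (zero_le_one.trans hx1) m)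
    _ = x ^ (m + 1) := (pow_succ' _ _).symm
    _ ≤ x ^ n := pow_le_pow_right₀ hx1 hmn

theorem energy_of_shifted_subset
    (A : Finset ℚ) (hA0 : (0 : ℚ) ∉ A) (hA1 : (-1 : ℚ) ∉ A)
    (K : ℕ) (hK : 0 < K) (hAA : (A * A).card ≤ K * A.card)
    (k : ℕ) (hk : 2 ≤ k) :
    ∀ A' ⊆ A, (multEnergy k (A'.image fun a => a + 1) : ℝ) ≤
      (8 * (k : ℝ) ^ 4) ^ (k * K) * (A'.card : ℝ) ^ k := by
  intro A' hA'
  have hk4 : (4 : ℝ) ≤ 8 * (k : ℝ) ^ 4 := by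
    have hk1 : (1 : ℝ) ≤ k := by exact_mod_cast one_le_two.trans hk
    linarith [one_le_pow₀ hk1 (n := 4)]
  have hcard : #(A'.image fun a => a + 1) = #A' := card_image_of_injective _ (add_left_injective 1)
  rw [mul_comm k K, pow_mul, ← mul_pow, ← hcard]
  rcases le_or_gt #A (K * (K + 1)) with hsmall | hlarge
  · refine multEnergy_le_of_card_le ?_
    calc (#(A'.image fun a => a + 1) : ℝ) = #A' := by rw [hcard]
      _ ≤ 4 ^ K := by
        exact_mod_cast (card_le_card hA').trans (hsmall.trans (mul_add_one_le_four_pow K))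
      _ ≤ (8 * (k : ℝ) ^ 4) ^ K := by gcongr
  · obtain ⟨P, hPcard, hP⟩ := exists_determinesProducts k hA0
    have hbound : HasEnergyBound k (2 * (8 * (k : ℝ) ^ 4) ^ #P) (A'.image fun a => a + 1) := by
      refine hP.hasEnergyBound (by omega) ?_ ?_ ?_ <;> refine forall_mem_image.2 fun a ha => ?_
      · simpa using hA' ha
      · exact fun h => hA1 (eq_neg_of_add_eq_zero_left h ▸ hA' ha)
      · exact fun h => hA0 (add_eq_right.1 h ▸ hA' ha)
    have hP_lt : #P < K := hPcard.trans_lt (multDim_lt hA0 hAA hlarge)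
    exact (hbound.mono (two_mul_pow_le_pow (by linarith) hP_lt)).multEnergy_le (by omega)
end

section
/- Let p be a prime, let u be a nonzero integer not divisible by p, let k ≥ 1 be an integer, let j_1, …, j_{2k} be pairwise distinct positive integers, and let m_1, …, m_{2k} be nonzero rational numbers each with p-adic valuation 0. Then (m_1 p^{j_1} + u)(m_2 p^{j_2} + u) ⋯ (m_k p^{j_k} + u) ≠ (m_{k+1} p^{j_{k+1}} + u) ⋯ (m_{2k} p^{j_{2k}} + u). -/
open Finset

/-!
For a multiplicative valuation `v`, a difference `∏ i, f i - ∏ i, g i` of products of integral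
elements has the valuation of its largest factor-wise difference `f i - g i`, provided that this one
is unique and the other factors `f i` have valuation one. Apply this to `f i = a i + u` and
`g i = b i + u`, where by symmetry the strictly largest of the values `v (a i)`, `v (b i)` is some
`v (a i₀)`: the pairing of the two families is irrelevant, and the products differ by an element of
valuation `v (a i₀) > 0`. For the `p`-adic valuation, `a i₀` is the term with the smallest exponent.
-/

section Valuation

variable {R Γ₀ ι : Type*} [CommRing R] [LinearOrderedCommMonoidWithZero Γ₀] (v : Valuation R Γ₀)

theorem valuation_prod_sub_prod_lt {s : Finset ι} {f g : ι → R} {γ : Γ₀} (hγ : 0 < γ)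
    (hf : ∀ i ∈ s, v (f i) ≤ 1) (hg : ∀ i ∈ s, v (g i) ≤ 1)
    (hfg : ∀ i ∈ s, v (f i - g i) < γ) : v (∏ i ∈ s, f i - ∏ i ∈ s, g i) < γ := by
  induction s using Finset.cons_induction with
  | empty => simpa using hγ
  | cons i s hi ih =>
    rw [forall_mem_cons] at hf hg hfg
    have telescope : ∏ l ∈ cons i s hi, f l - ∏ l ∈ cons i s hi, g l =
        (f i - g i) * ∏ l ∈ s, f l + g i * (∏ l ∈ s, f l - ∏ l ∈ s, g l) := by
      rw [prod_cons, prod_cons]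
      ring
    rw [telescope]
    apply v.map_add_lt <;> rw [map_mul]
    · rw [map_prod]
      exact (mul_le_of_le_one_right' (prod_le_one' hf.2)).trans_lt hfg.1
    · exact (mul_le_of_le_one_left' hg.1).trans_lt (ih hf.2 hg.2 hfg.2)

theorem valuation_prod_sub_prod_eq [DecidableEq ι] {s : Finset ι} {f g : ι → R} {i₀ : ι}
    (hi₀ : i₀ ∈ s) (hpos : 0 < v (f i₀ - g i₀)) (hf : ∀ i ∈ s.erase i₀, v (f i) = 1)
    (hg : ∀ i ∈ s, v (g i) ≤ 1) (hfg : ∀ i ∈ s.erase i₀, v (f i - g i) < v (f i₀ - g i₀)) :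
    v (∏ i ∈ s, f i - ∏ i ∈ s, g i) = v (f i₀ - g i₀) := by
  have leading : v ((f i₀ - g i₀) * ∏ i ∈ s.erase i₀, f i) = v (f i₀ - g i₀) := by
    rw [map_mul, map_prod, prod_eq_one hf, mul_one]
  have remainder : v (g i₀ * (∏ i ∈ s.erase i₀, f i - ∏ i ∈ s.erase i₀, g i)) <
      v (f i₀ - g i₀) := by
    rw [map_mul]
    exact (mul_le_of_le_one_left' (hg i₀ hi₀)).trans_lt <|
      valuation_prod_sub_prod_lt v hpos (fun i hi ↦ (hf i hi).le)
        (fun i hi ↦ hg i (mem_of_mem_erase hi)) hfg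
  have telescope : ∏ i ∈ s, f i - ∏ i ∈ s, g i = (f i₀ - g i₀) * ∏ i ∈ s.erase i₀, f i +
      g i₀ * (∏ i ∈ s.erase i₀, f i - ∏ i ∈ s.erase i₀, g i) := by
    rw [← mul_prod_erase s f hi₀, ← mul_prod_erase s g hi₀]
    ring
  rw [telescope, v.map_add_eq_of_lt_left (remainder.trans_eq leading.symm), leading]

variable [Fintype ι] {u : R}

theorem prod_add_ne_prod_add_of_valuation_lt (hu : v u = 1) {a b : ι → R} {i₀ : ι}
    (hle : v (a i₀) ≤ 1) (ha : ∀ i ≠ i₀, v (a i) < v (a i₀)) (hb : ∀ i, v (b i) < v (a i₀)) :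
    ∏ i, (a i + u) ≠ ∏ i, (b i + u) := by
  classical
  have leading : v (a i₀ + u - (b i₀ + u)) = v (a i₀) := by
    rw [add_sub_add_right_eq_sub, v.map_sub_eq_of_lt_left (hb i₀)]
  have hpos : 0 < v (a i₀) := zero_le.trans_lt (hb i₀)
  have heq : v (∏ i, (a i + u) - ∏ i, (b i + u)) = v (a i₀) := by
    rw [← leading]
    refine valuation_prod_sub_prod_eq v (mem_univ i₀) (leading ▸ hpos) (fun i hi ↦ ?_)
      (fun i _ ↦ v.map_add_le ((hb i).le.trans hle) hu.le) (fun i hi ↦ ?_)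
    · have hlt : v (a i) < v u := hu ▸ (ha i (ne_of_mem_erase hi)).trans_le hle
      rw [v.map_add_eq_of_lt_right hlt, hu]
    · rw [leading, add_sub_add_right_eq_sub]
      exact v.map_sub_lt (ha i (ne_of_mem_erase hi)) (hb i)
  intro h
  rw [h, sub_self, map_zero] at heq
  exact hpos.ne heq

theorem no_solutions_with_distinct_powers_general [Nonempty ι] (hu : v u = 1) {x : ι ⊕ ι → R}
    (hx : ∀ i, v (x i) ≤ 1) (hinj : Function.Injective fun i ↦ v (x i)) :
    ∏ i, (x (.inl i) + u) ≠ ∏ i, (x (.inr i) + u) := by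
  obtain ⟨i₀, hmax⟩ := Finite.exists_max fun i ↦ v (x i)
  have hlt : ∀ i ≠ i₀, v (x i) < v (x i₀) := fun i hi ↦ (hmax i).lt_of_ne (hinj.ne hi)
  rcases i₀ with i₀ | i₀
  · exact prod_add_ne_prod_add_of_valuation_lt v (a := fun i ↦ x (.inl i)) hu (hx _)
      (fun i hi ↦ hlt _ (Sum.inl_injective.ne hi)) (fun i ↦ hlt _ Sum.inr_ne_inl)
  · exact (prod_add_ne_prod_add_of_valuation_lt v (a := fun i ↦ x (.inr i)) hu (hx _)
      (fun i hi ↦ hlt _ (Sum.inr_injective.ne hi)) (fun i ↦ hlt _ Sum.inl_ne_inr)).symm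

end Valuation

section PadicValuation

variable {p : ℕ} [Fact p.Prime]

theorem padicValuation_mul_pow {q : ℚ} (hq : q ≠ 0) (hv : padicValRat p q = 0) (n : ℕ) :
    Rat.padicValuation p (q * (p : ℚ) ^ n) = WithZero.exp (-n : ℤ) := by
  have hq_unit : Rat.padicValuation p q = 1 := by simp [Rat.padicValuation, hq, hv]
  rw [map_mul, map_pow, hq_unit, one_mul, Rat.padicValuation_self, ← WithZero.exp_nsmul,
    nsmul_eq_mul, mul_neg_one]

theorem padicValuation_mul_pow_le_one {q : ℚ} (hq : q ≠ 0) (hv : padicValRat p q = 0) (n : ℕ) :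
    Rat.padicValuation p (q * (p : ℚ) ^ n) ≤ 1 := by
  rw [padicValuation_mul_pow hq hv, ← WithZero.exp_zero, WithZero.exp_le_exp]
  exact neg_nonpos.2 n.cast_nonneg

theorem padicValuation_mul_pow_injective {ι : Type*} {m : ι → ℚ} {j : ι → ℕ}
    (hm : ∀ i, m i ≠ 0) (hv : ∀ i, padicValRat p (m i) = 0) (hj : Function.Injective j) :
    Function.Injective fun i ↦ Rat.padicValuation p (m i * (p : ℚ) ^ j i) := by
  simp only [padicValuation_mul_pow (hm _) (hv _)]
  exact WithZero.exp_injective.comp (neg_injective.comp (Nat.cast_injective.comp hj))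

end PadicValuation

theorem no_solutions_with_distinct_powers
    (p : ℕ) (hp : p.Prime) (u : ℤ) (hu : u ≠ 0) (hpu : ¬ (p : ℤ) ∣ u)
    (k : ℕ) (hk : 1 ≤ k)
    (j : Fin (k + k) → ℕ) (hjpos : ∀ i, 0 < j i) (hjinj : Function.Injective j)
    (m : Fin (k + k) → ℚ) (hm0 : ∀ i, m i ≠ 0)
    (hmv : ∀ i, padicValRat p (m i) = 0) :
    (∏ i : Fin k, (m (Fin.castAdd k i) * (p : ℚ) ^ j (Fin.castAdd k i) + (u : ℚ))) ≠
      ∏ i : Fin k, (m (Fin.natAdd k i) * (p : ℚ) ^ j (Fin.natAdd k i) + (u : ℚ)) := by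
  have : Fact p.Prime := ⟨hp⟩
  have : NeZero k := ⟨Nat.one_le_iff_ne_zero.1 hk⟩
  exact no_solutions_with_distinct_powers_general (Rat.padicValuation p)
    (Int.padicValuation_eq_one_iff.2 hpu)
    (fun i ↦ padicValuation_mul_pow_le_one (hm0 (finSumFinEquiv i)) (hmv _) (j _))
    ((padicValuation_mul_pow_injective hm0 hmv hjinj).comp finSumFinEquiv.injective)
end

section
/- (Chang) Let A be a finite set of nonzero rational numbers, let K be a positive integer with |AA| ≤ K|A|, and let k ≥ 2 be an integer. Then the k-fold additive energy satisfies E_k^+(A) ≤ |A|^k (2k^2 - k)^{kK}. -/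
open Finset Pointwise

/-- The `k`-fold additive energy of a finite set `A ⊆ ℚ`: the number of
`2k`-tuples `(a₁, …, a_{2k}) ∈ A^{2k}` with `a₁ + ⋯ + a_k = a_{k+1} + ⋯ + a_{2k}`. -/
def addEnergy (k : ℕ) (A : Finset ℚ) : ℕ :=
  (((Fintype.piFinset fun _ : Fin k => A) ×ˢ
      (Fintype.piFinset fun _ : Fin k => A)).filter
      (fun fg => ∑ i, fg.1 i = ∑ i, fg.2 i)).card

/-!
Assign to each element of `A` its vector of `p`-adic valuations. Since `|AA| ≤ K|A|`, Freiman's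
lemma shows that these vectors span an affine space of dimension less than `K`, unless
`|A| ≤ K(K + 1) ≤ 6 ^ K`, when the trivial bound `E(A) ^ (1/k) ≤ |A| ^ 2` suffices.

Fix a prime `p` and split `A` into the fibres `Aⱼ` of the `p`-adic valuation. By the ultrametric
inequality, in every solution counted by the `k`-fold energy `E(A)` two of the `2k` coordinates have
the same valuation, so a union bound over pairs of coordinates and Hölder's inequality for
exponential sums give `E(A) ^ (1/k) ≤ (2k choose 2) ∑ⱼ E(Aⱼ) ^ (1/k)`. If `p` separates elements of
`A`, then each fibre has smaller dimension, so after at most `K - 1` such splittings the valuations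
are constant, and `A` is contained in some `{a, -a}`.
-/

open scoped BigOperators ComplexConjugate

/-! ### Freiman's lemma -/

section Freiman

variable {𝕜 V G : Type*} [DivisionRing 𝕜] [AddCommGroup V] [Module 𝕜 V]

theorem finrank_vectorSpan_lt_card {S : Finset V} (hS : S.Nonempty) :
    Module.finrank 𝕜 (vectorSpan 𝕜 (S : Set V)) < #S := by
  classical
  obtain ⟨n, hn⟩ := Nat.exists_eq_add_one_of_ne_zero hS.card_ne_zero
  have := finrank_vectorSpan_image_finset_le 𝕜 id S hn
  rw [image_id] at this
  lia

theorem finrank_vectorSpan_le_of_subset_affineSpan {s t : Set V} (ht : t.Finite)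
    (hst : s ⊆ (affineSpan 𝕜 t : Set V)) :
    Module.finrank 𝕜 (vectorSpan 𝕜 s) ≤ Module.finrank 𝕜 (vectorSpan 𝕜 t) := by
  have := finiteDimensional_vectorSpan_of_finite 𝕜 ht
  refine Submodule.finrank_mono ?_
  rw [← direction_affineSpan, ← direction_affineSpan]
  exact AffineSubspace.direction_le (affineSpan_le.2 hst)

theorem mem_affineSubspace_of_add_eq_add {Q : AffineSubspace 𝕜 V} {v w x y : V} (hv : v ∈ Q)
    (hx : x ∈ Q) (hy : y ∈ Q) (h : x + y = v + w) : w ∈ Q := by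
  have hw := Q.smul_vsub_vadd_mem 1 hx hv hy
  rwa [one_smul, vsub_eq_sub, vadd_eq_add, sub_add_eq_add_sub, h, add_sub_cancel_left] at hw

theorem image_subset_insert_image_filter_ne {α β : Type*} [DecidableEq β] (f : α → β)
    (s : Finset α) (b : β) : f '' s ⊆ insert b (f '' ({a ∈ s | f a ≠ b} : Finset α)) := by
  rintro _ ⟨a, ha, rfl⟩
  by_cases hab : f a = b
  · exact Or.inl hab
  · exact Or.inr ⟨a, mem_filter.2 ⟨ha, hab⟩, rfl⟩

variable [AddCancelCommMonoid G] [DecidableEq G]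

theorem card_fiber_add_of_injOn [DecidableEq V] {A T : Finset G} {φ : G →+ V} {v : V}
    (hT : Set.InjOn φ T) : #({a ∈ A | φ a = v} + T) = #{a ∈ A | φ a = v} * #T := by
  refine card_add_iff.2 fun x hx y hy hxy => ?_
  simp only [Set.mem_prod, mem_coe, mem_filter] at hx hy
  have hφ : φ x.2 = φ y.2 := by
    have := congrArg φ hxy
    simpa only [map_add, hx.1.2, hy.1.2, add_right_inj] using this
  have h2 := hT hx.2 hy.2 hφ
  exact Prod.ext (add_right_cancel (hxy.trans (congrArg (y.1 + ·) h2.symm))) h2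

variable [LinearOrder V] [IsOrderedAddMonoid V]

theorem mem_affineSpan_of_isGreatest {S : Finset V} {v : V} (hv : IsGreatest (S : Set V) v) :
    ∀ w ∈ S, w ∈ affineSpan 𝕜 {w ∈ S | v + w ∉ S.erase v + S.erase v} := by
  classical
  set Q := affineSpan 𝕜 {w ∈ S | v + w ∉ S.erase v + S.erase v}
  have hlt : ∀ x ∈ S.erase v, x < v := fun x hx =>
    (hv.2 (mem_of_mem_erase hx)).lt_of_ne (ne_of_mem_erase hx)
  have hSQ : ∀ w ∈ S, v + w ∉ S.erase v + S.erase v → w ∈ Q := fun w hw hvw =>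
    subset_affineSpan 𝕜 _ ⟨hw, hvw⟩
  have hvQ : v ∈ Q := hSQ v hv.1 fun h => by
    obtain ⟨x, hx, y, hy, hxy⟩ := mem_add.1 h
    exact (add_lt_add (hlt x hx) (hlt y hy)).ne hxy
  by_contra! hS
  -- If `v + w = x + y` with `x, y < v` then `x, y > w`: the largest `w ∉ Q` is a contradiction.
  obtain ⟨w, hw, hwmax⟩ := ({w ∈ S | w ∉ Q} : Finset V).exists_max_image id
    (filter_nonempty_iff.2 hS)
  obtain ⟨hwS, hwQ⟩ := mem_filter.1 hw
  have hgt : ∀ z ∈ S.erase v, w < z → z ∈ Q := fun z hz hwz => by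
    by_contra hzQ
    exact (hwmax z (mem_filter.2 ⟨mem_of_mem_erase hz, hzQ⟩)).not_gt hwz
  obtain ⟨x, hx, y, hy, hxy⟩ := mem_add.1 (not_not.1 fun h => hwQ (hSQ w hwS h))
  have hwx : w < x := lt_of_add_lt_add_left (hxy.symm.trans_lt
    ((add_lt_add_right (hlt y hy) x).trans_eq (add_comm x v)))
  have hwy : w < y := lt_of_add_lt_add_left (hxy.symm.trans_lt (add_lt_add_left (hlt x hx) y))
  exact hwQ (mem_affineSubspace_of_add_eq_add hvQ (hgt x hx hwx) (hgt y hy hwy) hxy)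

variable {A : Finset G} {φ : G →+ V} {v : V}

theorem card_add_self_add_card_fiber_mul_le (hv : IsGreatest (φ '' A) v) :
    #({a ∈ A | φ a ≠ v} + {a ∈ A | φ a ≠ v}) +
      #{a ∈ A | φ a = v} * (Module.finrank 𝕜 (vectorSpan 𝕜 (φ '' A)) + 1) ≤ #(A + A) := by
  rw [← coe_image] at hv ⊢
  set S := A.image φ
  set T := {w ∈ S | v + w ∉ S.erase v + S.erase v}
  have hST : ∀ w ∈ S, w ∈ affineSpan 𝕜 (T : Set V) := by
    rw [coe_filter]
    exact mem_affineSpan_of_isGreatest (𝕜 := 𝕜) hv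
  have hT : T.Nonempty := by
    rw [← coe_nonempty, ← affineSpan_nonempty 𝕜]
    exact ⟨v, hST v hv.1⟩
  obtain ⟨T', hT'A, hinj, himage⟩ := exists_subset_injOn_image_eq_of_surjOn (A : Set G) T
    ((Set.surjOn_image φ A).mono Subset.rfl (by
      rw [← coe_image]
      exact coe_subset.2 (filter_subset _ S)))
  -- `T` spans `S`, so it has more than `dim S` elements, and each sums to something new with the
  -- fibre over `v`.
  have hdisj : Disjoint ({a ∈ A | φ a ≠ v} + {a ∈ A | φ a ≠ v}) ({a ∈ A | φ a = v} + T') := by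
    rw [disjoint_left]
    rintro _ h h'
    obtain ⟨f, hf, t, ht, rfl⟩ := mem_add.1 h'
    obtain ⟨x, hx, y, hy, hxy⟩ := mem_add.1 h
    have htT : φ t ∈ T := himage ▸ mem_image_of_mem φ ht
    have hmem : ∀ z ∈ {a ∈ A | φ a ≠ v}, φ z ∈ S.erase v := fun z hz =>
      mem_erase.2 ⟨(mem_filter.1 hz).2, mem_image_of_mem φ (mem_filter.1 hz).1⟩
    refine (mem_filter.1 htT).2 (mem_add.2 ⟨φ x, hmem x hx, φ y, hmem y hy, ?_⟩)
    rw [← map_add, hxy, map_add, (mem_filter.1 hf).2]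
  calc _ ≤ #({a ∈ A | φ a ≠ v} + {a ∈ A | φ a ≠ v}) + #({a ∈ A | φ a = v} + T') := by
        rw [card_fiber_add_of_injOn hinj, ← card_image_of_injOn hinj, himage]
        gcongr
        exact (finrank_vectorSpan_le_of_subset_affineSpan T.finite_toSet hST).trans_lt
          (finrank_vectorSpan_lt_card hT)
    _ = _ := (card_union_of_disjoint hdisj).symm
    _ ≤ #(A + A) := card_le_card (union_subset
        (add_subset_add (filter_subset _ A) (filter_subset _ A))
        (add_subset_add (filter_subset _ A) (coe_subset.1 hT'A)))

theorem card_add_self_add_card_le (hv : IsGreatest (φ '' A) v)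
    (hspan : v ∉ affineSpan 𝕜 (φ '' {a ∈ A | φ a ≠ v})) :
    #({a ∈ A | φ a ≠ v} + {a ∈ A | φ a ≠ v}) + #A ≤ #(A + A) := by
  obtain ⟨b, hb, rfl⟩ := hv.1
  have hlt : ∀ a ∈ {a ∈ A | φ a ≠ φ b}, φ a < φ b := fun a ha =>
    (hv.2 (Set.mem_image_of_mem φ (mem_filter.1 ha).1)).lt_of_ne (mem_filter.1 ha).2
  have hmem : ∀ a ∈ {a ∈ A | φ a ≠ φ b}, φ a ∈ affineSpan 𝕜 (φ '' {a ∈ A | φ a ≠ φ b}) :=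
    fun a ha => subset_affineSpan 𝕜 _ (Set.mem_image_of_mem φ (mem_filter.1 ha))
  have hdisj : Disjoint ({a ∈ A | φ a ≠ φ b} + {a ∈ A | φ a ≠ φ b}) ({b} + A) := by
    rw [disjoint_left]
    rintro _ h h'
    obtain ⟨b', hb', w, hw, rfl⟩ := mem_add.1 h'
    obtain rfl := mem_singleton.1 hb'
    obtain ⟨x, hx, y, hy, hxy⟩ := mem_add.1 h
    have hxy' := congrArg φ hxy
    rw [map_add, map_add] at hxy'
    rcases eq_or_ne (φ w) (φ b') with hwb | hwb
    · exact (add_lt_add (hlt x hx) (hlt y hy)).ne (hwb ▸ hxy')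
    · exact hspan (mem_affineSubspace_of_add_eq_add (hmem w (mem_filter.2 ⟨hw, hwb⟩)) (hmem x hx)
        (hmem y hy) (hxy'.trans (add_comm _ _)))
  rw [← card_singleton_add b A, ← card_union_of_disjoint hdisj]
  exact card_le_card (union_subset (add_subset_add (filter_subset _ A) (filter_subset _ A))
    (add_subset_add_right (singleton_subset_iff.2 hb)))

/-- Freiman's lemma is the case `c = 1`. The induction removes the fibre of `φ` over the largest
element of `φ '' A`. -/
theorem two_mul_card_le_of_le_finrank_vectorSpan {c d : ℕ} (hc : ∀ x, #{a ∈ A | φ a = x} ≤ c)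
    (hd : d ≤ Module.finrank 𝕜 (vectorSpan 𝕜 (φ '' A))) :
    2 * (d + 1) * #A ≤ 2 * #(A + A) + c * d * (d + 1) := by
  induction A using Finset.strongInduction generalizing d with
  | H A ih =>
  rcases A.eq_empty_or_nonempty with rfl | hA
  · simp
  obtain ⟨b, hb, hmax⟩ := A.exists_max_image φ hA
  generalize hbv : φ b = v at hmax
  have hv : IsGreatest (φ '' A) v := ⟨⟨b, hb, hbv⟩, Set.forall_mem_image.2 hmax⟩
  generalize hA' : {a ∈ A | φ a ≠ v} = A'
  have hA'A : A' ⊂ A := hA' ▸ filter_ssubset.2 ⟨b, hb, not_not.2 hbv⟩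
  have himage : φ '' A ⊆ insert v (φ '' A') := hA' ▸ image_subset_insert_image_filter_ne φ A v
  have hcard : #{a ∈ A | φ a = v} + #A' = #A := hA' ▸ card_filter_add_card_filter_not _
  have ih' := fun {e} => ih A' hA'A (d := e) fun x =>
    (card_le_card (filter_subset_filter _ hA'A.subset)).trans (hc x)
  by_cases hdim : d ≤ Module.finrank 𝕜 (vectorSpan 𝕜 (φ '' A'))
  · have hsum := card_add_self_add_card_fiber_mul_le (𝕜 := 𝕜) hv
    rw [hA'] at hsum
    have hfib := Nat.mul_le_mul_left (#{a ∈ A | φ a = v}) (Nat.add_le_add_right hd 1)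
    rw [← hcard, mul_add]
    linarith [ih' hdim]
  · have hspan : v ∉ affineSpan 𝕜 (φ '' A') := fun hmem => hdim <| hd.trans <|
      finrank_vectorSpan_le_of_subset_affineSpan (A'.finite_toSet.image φ) <|
        himage.trans (Set.insert_subset hmem (subset_affineSpan 𝕜 _))
    have hsucc : Module.finrank 𝕜 (vectorSpan 𝕜 (φ '' A)) ≤
        Module.finrank 𝕜 (vectorSpan 𝕜 (φ '' A')) + 1 :=
      (finrank_vectorSpan_le_of_subset_affineSpan ((A'.finite_toSet.image φ).insert v)
        (himage.trans (subset_affineSpan 𝕜 _))).trans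
        (finrank_vectorSpan_insert_le_set 𝕜 _ v)
    obtain ⟨e, rfl⟩ := Nat.exists_eq_add_one_of_ne_zero (by lia : d ≠ 0)
    have hsum := card_add_self_add_card_le hv (𝕜 := 𝕜) (by rwa [← coe_filter, hA'])
    rw [hA'] at hsum
    nlinarith [ih' (e := e) (by lia), hc v]

end Freiman

/-! ### Multiplicative dimension -/

section MulDim

theorem padicValuation_eq_exp {x : ℚ} (hx : x ≠ 0) (p : ℕ) [Fact p.Prime] :
    Rat.padicValuation p x = WithZero.exp (-padicValRat p x) :=
  if_neg hx

theorem den_eq_one_of_padicValRat_nonneg {c : ℚ}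
    (h : ∀ (p : ℕ) [Fact p.Prime], 0 ≤ padicValRat p c) : c.den = 1 := by
  rcases eq_or_ne c 0 with rfl | hc
  · simp
  refine Nat.eq_one_iff_not_exists_prime_dvd.2 fun p hp => ?_
  have : Fact p.Prime := ⟨hp⟩
  rw [← Rat.padicValuation_le_one_iff, padicValuation_eq_exp hc, ← WithZero.exp_zero,
    WithZero.exp_le_exp, neg_nonpos]
  exact h p

theorem abs_eq_one_of_padicValRat_eq_zero {c : ℚ} (hc : c ≠ 0)
    (h : ∀ (p : ℕ) [Fact p.Prime], padicValRat p c = 0) : |c| = 1 := by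
  have hden : (c.num : ℚ) = c :=
    Rat.coe_int_num_of_den_eq_one (den_eq_one_of_padicValRat_nonneg fun p _ => (h p).ge)
  have hden_inv : (c⁻¹.num : ℚ) = c⁻¹ :=
    Rat.coe_int_num_of_den_eq_one <| den_eq_one_of_padicValRat_nonneg fun p _ => by
      rw [padicValRat.inv, h, neg_zero]
  have hmul : c.num * c⁻¹.num = 1 := by
    rw [← Int.cast_inj (α := ℚ), Int.cast_mul, hden, hden_inv, mul_inv_cancel₀ hc, Int.cast_one]
  rw [← hden, ← Int.cast_abs, Int.isUnit_iff_abs_eq.1 (IsUnit.of_mul_eq_one _ hmul), Int.cast_one]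

/-- The vector of all `p`-adic valuations of a rational number, with coordinates in `ℚ` to have a
vector space; `primeVal 0 = 0` is a junk value. The lexicographic order serves only to make this
space a linearly ordered group, for Freiman's lemma. -/
def primeVal (a : ℚ) : Lex ({p : ℕ // p.Prime} → ℚ) := toLex fun p => padicValRat p a

theorem primeVal_eq_primeVal_iff {a b : ℚ} :
    primeVal a = primeVal b ↔ ∀ (p : ℕ) [Fact p.Prime], padicValRat p a = padicValRat p b := by
  simp [primeVal, funext_iff, fact_iff]

theorem primeVal_mul {a b : ℚ} (ha : a ≠ 0) (hb : b ≠ 0) :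
    primeVal (a * b) = primeVal a + primeVal b := by
  rw [primeVal, primeVal, primeVal, ← toLex_add]
  congr 1
  ext p
  have : Fact p.1.Prime := ⟨p.2⟩
  simp [padicValRat.mul ha hb]

theorem abs_eq_abs_of_primeVal_eq {a b : ℚ} (ha : a ≠ 0) (hb : b ≠ 0)
    (h : primeVal a = primeVal b) : |a| = |b| := by
  rw [← div_eq_one_iff_eq (abs_ne_zero.2 hb), ← abs_div]
  refine abs_eq_one_of_padicValRat_eq_zero (div_ne_zero ha hb) fun p _ => ?_
  rw [padicValRat.div ha hb, primeVal_eq_primeVal_iff.1 h, sub_self]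

theorem card_le_two_of_primeVal_eq {A : Finset ℚ} (hA0 : (0 : ℚ) ∉ A)
    (h : ∀ a ∈ A, ∀ b ∈ A, primeVal a = primeVal b) : #A ≤ 2 := by
  rcases A.eq_empty_or_nonempty with rfl | ⟨b, hb⟩
  · simp
  refine (card_le_card (t := {b, -b}) fun a ha => ?_).trans card_le_two
  simpa using abs_eq_abs.1 (abs_eq_abs_of_primeVal_eq (ne_of_mem_of_not_mem ha hA0)
    (ne_of_mem_of_not_mem hb hA0) (h a ha b hb))

/-- The multiplicative dimension of a finite set of rationals: the dimension of the affine span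
of its valuation vectors. -/
noncomputable def mulDim (A : Finset ℚ) : ℕ :=
  Module.finrank ℚ (vectorSpan ℚ (primeVal '' A))

theorem succ_mul_card_le_of_le_mulDim {A : Finset ℚ} (hA0 : (0 : ℚ) ∉ A) {d : ℕ}
    (hd : d ≤ mulDim A) : (d + 1) * #A ≤ #(A * A) + d * (d + 1) := by
  let e : Additive ℚˣ → ℚ := fun u => u.toMul.val
  have he : Function.Injective e := Units.val_injective.comp Additive.toMul.injective
  have he0 : ∀ u, e u ≠ 0 := fun u => u.toMul.ne_zero
  have hmul : ∀ u v, e (u + v) = e u * e v := fun u v => by simp [e]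
  obtain ⟨B, -, rfl⟩ := subset_set_image_iff.1 (show (A : Set ℚ) ⊆ e '' Set.univ from
    fun a ha => ⟨.ofMul (Units.mk0 a (ne_of_mem_of_not_mem ha hA0)), trivial, rfl⟩)
  let φ : Additive ℚˣ →+ Lex ({p : ℕ // p.Prime} → ℚ) :=
    AddMonoidHom.mk' (fun u => primeVal (e u)) fun u v => by rw [hmul, primeVal_mul (he0 u) (he0 v)]
  have hfiber : ∀ x, #{u ∈ B | φ u = x} ≤ 2 := fun x => by
    rw [← card_image_of_injective _ he]
    refine card_le_two_of_primeVal_eq (by simp [he0]) ?_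
    simp only [mem_image, mem_filter, forall_exists_index, and_imp]
    rintro _ u - hu rfl _ v - hv rfl
    exact hu.trans hv.symm
  have himage : B.image e * B.image e = (B + B).image e := (image_image₂_distrib hmul).symm
  rw [mulDim, coe_image, ← Set.image_comp] at hd
  rw [himage, card_image_of_injective _ he, card_image_of_injective _ he]
  linarith [two_mul_card_le_of_le_finrank_vectorSpan (φ := φ) hfiber hd]

theorem mulDim_lt_of_card_mul_self_le {A : Finset ℚ} (hA0 : (0 : ℚ) ∉ A) {K : ℕ}
    (hAA : #(A * A) ≤ K * #A) (hA : K * (K + 1) < #A) : mulDim A < K := by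
  by_contra! hK
  linarith [succ_mul_card_le_of_le_mulDim hA0 hK]

theorem mulDim_filter_padicValRat_eq_lt {A : Finset ℚ} {p : ℕ} [Fact p.Prime] {a b : ℚ}
    (ha : a ∈ A) (hb : b ∈ A) (hab : padicValRat p a ≠ padicValRat p b) (j : ℤ) :
    mulDim {x ∈ A | padicValRat p x = j} < mulDim A := by
  have := finiteDimensional_vectorSpan_of_finite ℚ (A.finite_toSet.image primeVal)
  let π : Lex ({p : ℕ // p.Prime} → ℚ) →ₗ[ℚ] ℚ :=
    LinearMap.proj ⟨p, Fact.out⟩ ∘ₗ (ofLexLinearEquiv ℚ ({p : ℕ // p.Prime} → ℚ)).toLinearMap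
  have hπ : ∀ x y, π (primeVal x - primeVal y) = padicValRat p x - padicValRat p y :=
    fun x y => rfl
  have hker : vectorSpan ℚ (primeVal '' ({x ∈ A | padicValRat p x = j} : Finset ℚ)) ≤
      LinearMap.ker π := by
    rw [vectorSpan_def, Submodule.span_le]
    rintro _ ⟨_, ⟨x, hx, rfl⟩, _, ⟨y, hy, rfl⟩, rfl⟩
    exact (hπ x y).trans (by rw [(mem_filter.1 hx).2, (mem_filter.1 hy).2, sub_self])
  refine Submodule.finrank_lt_finrank_of_lt (lt_of_le_of_ne ?_ fun heq => ?_)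
  · exact vectorSpan_mono ℚ (Set.image_mono (coe_subset.2 (filter_subset _ A)))
  · have hmem := hker (heq ▸ vsub_mem_vectorSpan ℚ (Set.mem_image_of_mem primeVal ha)
      (Set.mem_image_of_mem primeVal hb))
    rw [LinearMap.mem_ker, vsub_eq_sub, hπ, sub_eq_zero, Int.cast_inj] at hmem
    exact hab hmem

end MulDim

/-! ### Hölder's inequality for balanced tuples -/

section Characters

theorem sum_prod_pow_card_le_prod_sum {ι R : Type*} (t : Finset ι) (s : Finset R)
    {f : ι → R → ℝ} (hf : ∀ i r, 0 ≤ f i r) :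
    (∑ r ∈ s, ∏ i ∈ t, f i r) ^ #t ≤ ∏ i ∈ t, ∑ r ∈ s, f i r ^ #t := by
  rcases t.eq_empty_or_nonempty with rfl | ht
  · simp
  have hn : #t ≠ 0 := ht.card_ne_zero
  lift f to ι → R → NNReal using hf
  beta_reduce
  let _ : MeasurableSpace R := ⊤
  have hholder := ENNReal.lintegral_prod_norm_pow_le (μ := MeasureTheory.Measure.count.restrict s) t
    (f := fun i r => (f i r : ENNReal) ^ #t) (fun i _ => measurable_from_top.aemeasurable)
    (p := fun _ => (#t : ℝ)⁻¹) (by simp [hn]) (fun _ _ => by positivity)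
  simp only [MeasureTheory.lintegral_finset, MeasureTheory.Measure.count_singleton, mul_one,
    ENNReal.pow_rpow_inv_natCast hn] at hholder
  have := pow_le_pow_left' hholder #t
  simp only [← prod_pow, ENNReal.rpow_inv_natCast_pow hn] at this
  exact_mod_cast this

theorem expect_prod_pow_card_le_prod_expect {ι R : Type*} [Fintype R] (t : Finset ι)
    {f : ι → R → ℝ} (hf : ∀ i r, 0 ≤ f i r) :
    (𝔼 r, ∏ i ∈ t, f i r) ^ #t ≤ ∏ i ∈ t, 𝔼 r, f i r ^ #t := by
  simp only [Fintype.expect_eq_sum_div_card, div_pow, prod_div_distrib, prod_const]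
  gcongr
  exact sum_prod_pow_card_le_prod_sum t univ hf

variable {G R ι κ : Type*} [AddCommGroup G] [Fintype R] [Fintype ι] [Fintype κ]

/-- The exponential sum of a finite set `B` at the character `χ`. -/
noncomputable def charSum (χ : AddChar G Circle) (B : Finset G) : ℂ := ∑ b ∈ B, (χ b : ℂ)

/-- The difference of the two sides of the equation `∑ i, x (inl i) = ∑ j, x (inr j)`. -/
def imbalance (x : ι ⊕ κ → G) : G := ∑ i, x (.inl i) - ∑ j, x (.inr j)

theorem char_sum_eq_prod (χ : AddChar G Circle) (x : ι → G) :
    (χ (∑ i, x i) : ℂ) = ∏ i, (χ (x i) : ℂ) :=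
  (congrArg Circle.coeHom (map_prod χ.toMonoidHom (fun i => Multiplicative.ofAdd (x i)) univ)).trans
    (map_prod Circle.coeHom _ _)

theorem char_imbalance (χ : AddChar G Circle) (x : ι ⊕ κ → G) :
    (χ (imbalance x) : ℂ) = (∏ i, (χ (x (.inl i)) : ℂ)) * ∏ j, conj (χ (x (.inr j)) : ℂ) := by
  rw [imbalance, sub_eq_add_neg, AddChar.map_add_eq_mul, AddChar.map_neg_eq_inv, Circle.coe_mul,
    Circle.coe_inv_eq_conj, char_sum_eq_prod, char_sum_eq_prod, map_prod]

variable [DecidableEq ι] [DecidableEq κ]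

theorem sum_piFinset_char_imbalance (χ : AddChar G Circle) (B : ι ⊕ κ → Finset G) :
    ∑ x ∈ Fintype.piFinset B, (χ (imbalance x) : ℂ) =
      (∏ i, charSum χ (B (.inl i))) * ∏ j, conj (charSum χ (B (.inr j))) := by
  have hfactor := prod_univ_sum B fun i b =>
    Sum.elim (fun _ => (χ b : ℂ)) (fun _ => conj (χ b : ℂ)) i
  simp only [Fintype.prod_sum_type, Sum.elim_inl, Sum.elim_inr] at hfactor
  simp only [char_imbalance, charSum, map_sum, hfactor]

variable [DecidableEq G]

/-- The tuples `x` with `x i ∈ B i` which solve `∑ i, x (inl i) = ∑ j, x (inr j)`. -/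
def balancedTuples (B : ι ⊕ κ → Finset G) : Finset (ι ⊕ κ → G) :=
  {x ∈ Fintype.piFinset B | imbalance x = 0}

theorem mem_balancedTuples {B : ι ⊕ κ → Finset G} {x : ι ⊕ κ → G} :
    x ∈ balancedTuples B ↔ (∀ i, x i ∈ B i) ∧ imbalance x = 0 := by
  rw [balancedTuples, mem_filter, Fintype.mem_piFinset]

/-- The characters `χ r` detect zero on `S` if their average is the indicator function of `0`
on `S`. -/
def DetectsZeroOn (χ : R → AddChar G Circle) (S : Finset G) : Prop :=
  ∀ s ∈ S, 𝔼 r, (χ r s : ℂ) = if s = 0 then 1 else 0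

theorem DetectsZeroOn.card_balancedTuples {χ : R → AddChar G Circle} {B : ι ⊕ κ → Finset G}
    (hχ : DetectsZeroOn χ ((Fintype.piFinset B).image imbalance)) :
    (#(balancedTuples B) : ℂ) =
      𝔼 r, (∏ i, charSum (χ r) (B (.inl i))) * ∏ j, conj (charSum (χ r) (B (.inr j))) := by
  simp only [← sum_piFinset_char_imbalance]
  rw [expect_sum_comm, sum_congr rfl fun x hx => hχ _ (mem_image_of_mem _ hx), sum_boole,
    balancedTuples]

theorem DetectsZeroOn.card_balancedTuples_le {χ : R → AddChar G Circle} {B : ι ⊕ κ → Finset G}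
    (hχ : DetectsZeroOn χ ((Fintype.piFinset B).image imbalance)) :
    (#(balancedTuples B) : ℝ) ≤ 𝔼 r, ∏ i, ‖charSum (χ r) (B i)‖ := by
  rw [← Complex.norm_natCast, hχ.card_balancedTuples]
  refine (RCLike.norm_expect_le (K := ℂ)).trans_eq (expect_congr rfl fun r _ => ?_)
  simp only [norm_mul, norm_prod, RCLike.norm_conj, Fintype.prod_sum_type]

theorem DetectsZeroOn.card_balancedTuples_const {χ : R → AddChar G Circle} {B : Finset G}
    (hχ : DetectsZeroOn χ ((Fintype.piFinset fun _ : ι ⊕ ι => B).image imbalance)) :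
    (#(balancedTuples fun _ : ι ⊕ ι => B) : ℝ) =
      𝔼 r, ‖charSum (χ r) B‖ ^ Fintype.card (ι ⊕ ι) := by
  have hcard := hχ.card_balancedTuples
  simp only [prod_const, card_univ, ← mul_pow, Complex.mul_conj', ← pow_mul] at hcard
  rw [Fintype.card_sum, ← two_mul]
  exact_mod_cast hcard

theorem DetectsZeroOn.card_balancedTuples_pow_le {χ : R → AddChar G Circle}
    {B : ι ⊕ ι → Finset G}
    (hχ : DetectsZeroOn χ
      ((Fintype.piFinset fun _ : ι ⊕ ι => univ.biUnion B).image imbalance)) :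
    #(balancedTuples B) ^ Fintype.card (ι ⊕ ι) ≤ ∏ i, #(balancedTuples fun _ : ι ⊕ ι => B i) := by
  have hsub : ∀ C : ι ⊕ ι → Finset G, (∀ i, C i ⊆ univ.biUnion B) →
      DetectsZeroOn χ ((Fintype.piFinset C).image imbalance) := fun C hC s hs =>
    hχ s (image_subset_image (Fintype.piFinset_subset _ _ hC) hs)
  have hB : ∀ i, B i ⊆ univ.biUnion B := fun i => subset_biUnion_of_mem B (mem_univ i)
  have hholder := expect_prod_pow_card_le_prod_expect univ (f := fun i r => ‖charSum (χ r) (B i)‖)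
    fun _ _ => norm_nonneg _
  simp only [card_univ, ← fun i => (hsub (fun _ => B i) fun _ => hB i).card_balancedTuples_const]
    at hholder
  exact_mod_cast (pow_le_pow_left₀ (Nat.cast_nonneg _) (hsub B hB).card_balancedTuples_le _).trans
    hholder

end Characters

section DetectingCharacters

/-- The character `s ↦ exp(2πi t s)` of the rational numbers. -/
noncomputable def ratChar (t : ℝ) : AddChar ℚ Circle :=
  Real.fourierChar.compAddMonoidHom ((AddMonoidHom.mulLeft t).comp (Rat.castHom ℝ))

theorem ratChar_apply (t : ℝ) (s : ℚ) : ratChar t s = Real.fourierChar (t * s) := rfl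

theorem fourierChar_val_mul_div {M : ℕ} [NeZero M] (r : ZMod M) (z : ℤ) :
    (Real.fourierChar (r.val * z / M) : ℂ) = ZMod.stdAddChar (r * (z : ZMod M)) := by
  have hr : r * z = ((r.val * z : ℤ) : ZMod M) := by simp
  rw [hr, ZMod.stdAddChar_coe, Real.fourierChar_apply]
  push_cast
  ring_nf

theorem exists_detectsZeroOn (S : Finset ℚ) :
    ∃ (M : ℕ) (_ : NeZero M) (χ : ZMod M → AddChar ℚ Circle), DetectsZeroOn χ S := by
  obtain ⟨⟨D, hD⟩, hDS⟩ := IsLocalization.exist_integer_multiples_of_finset (nonZeroDivisors ℤ) S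
  rw [mem_nonZeroDivisors_iff_ne_zero] at hD
  choose! z hz using hDS
  simp only [eq_intCast, zsmul_eq_mul] at hz
  let M : ℕ := ∑ s ∈ S, (z s).natAbs + 1
  refine ⟨M, inferInstance, fun r => ratChar (r.val * D / M), fun s hs => ?_⟩
  have hzM : (z s).natAbs < M :=
    Nat.lt_succ_of_le (single_le_sum (f := fun s => (z s).natAbs) (fun _ _ => Nat.zero_le _) hs)
  have hchar : ∀ r : ZMod M, (ratChar (r.val * D / M) s : ℂ) =
      ZMod.stdAddChar (r * (z s : ZMod M)) := fun r => by
    have hzs : (z s : ℝ) = D * s := by exact_mod_cast hz s hs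
    rw [← fourierChar_val_mul_div, ratChar_apply, hzs]
    ring_nf
  have hzero : (z s : ZMod M) = 0 ↔ s = 0 := by
    have hzs : z s = 0 ↔ s = 0 := by
      rw [← Int.cast_eq_zero (α := ℚ), hz s hs, mul_eq_zero, Int.cast_eq_zero, or_iff_right hD]
    rw [ZMod.intCast_zmod_eq_zero_iff_dvd, ← hzs]
    exact ⟨fun h => Int.eq_zero_of_dvd_of_natAbs_lt_natAbs h hzM, fun h => h ▸ dvd_zero _⟩
  simp only [hchar, Fintype.expect_eq_sum_div_card,
    AddChar.sum_mulShift _ (ZMod.isPrimitive_stdAddChar M), hzero]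
  split_ifs <;> simp

end DetectingCharacters

/-! ### Repeated valuations -/

section Ultrametric

theorem exists_valuation_eq_of_sum_eq_zero {R Γ₀ ι : Type*} [Ring R]
    [LinearOrderedCommMonoidWithZero Γ₀] (v : Valuation R Γ₀) {s : Finset ι} (hs : s.Nonempty)
    {y : ι → R} (hy : ∀ i ∈ s, v (y i) ≠ 0) (hsum : ∑ i ∈ s, y i = 0) :
    ∃ i ∈ s, ∃ j ∈ s, i ≠ j ∧ v (y i) = v (y j) := by
  classical
  by_contra! hne
  obtain ⟨i, hi, hmax⟩ := s.exists_max_image (v ∘ y) hs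
  refine hy i hi ?_
  rw [← v.map_sum_eq_of_lt hi fun j hj => ?_, hsum, map_zero]
  obtain ⟨hj, hji⟩ := mem_sdiff.1 hj
  exact (hmax j hj).lt_of_ne (hne j hj i hi (notMem_singleton.1 hji))

theorem exists_valuation_eq_of_imbalance_eq_zero {R Γ₀ ι κ : Type*} [Ring R]
    [LinearOrderedCommMonoidWithZero Γ₀] (v : Valuation R Γ₀) [Fintype ι] [Fintype κ]
    [Nonempty (ι ⊕ κ)] {x : ι ⊕ κ → R} (hx : ∀ i, v (x i) ≠ 0) (hsum : imbalance x = 0) :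
    ∃ i j, i ≠ j ∧ v (x i) = v (x j) := by
  let y : ι ⊕ κ → R := Sum.elim (fun i => x (.inl i)) fun j => -x (.inr j)
  have hv : ∀ i, v (y i) = v (x i) := by simp [y, Valuation.map_neg]
  have hy : ∑ i, y i = 0 := by
    rw [← hsum, imbalance, Fintype.sum_sum_type, sub_eq_add_neg, ← sum_neg_distrib]
    rfl
  obtain ⟨i, -, j, -, hij, h⟩ := exists_valuation_eq_of_sum_eq_zero v univ_nonempty
    (fun i _ => (hv i).trans_ne (hx i)) hy
  exact ⟨i, j, hij, by rw [← hv, h, hv]⟩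

theorem exists_padicValRat_eq_of_imbalance_eq_zero {ι κ : Type*} [Fintype ι] [Fintype κ]
    [Nonempty (ι ⊕ κ)] (p : ℕ) [Fact p.Prime] {x : ι ⊕ κ → ℚ} (hx : ∀ i, x i ≠ 0)
    (hsum : imbalance x = 0) : ∃ i j, i ≠ j ∧ padicValRat p (x i) = padicValRat p (x j) := by
  obtain ⟨i, j, hij, h⟩ := exists_valuation_eq_of_imbalance_eq_zero (Rat.padicValuation p)
    (fun i => (Valuation.ne_zero_iff _).2 (hx i)) hsum
  refine ⟨i, j, hij, ?_⟩
  rwa [padicValuation_eq_exp (hx i), padicValuation_eq_exp (hx j), WithZero.exp_inj,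
    neg_inj] at h

end Ultrametric

/-! ### Recursion for the energy -/

section Energy

variable {k : ℕ}

theorem card_balancedTuples_pow_le_prod {ι : Type*} [Fintype ι] [DecidableEq ι]
    (B : ι ⊕ ι → Finset ℚ) :
    #(balancedTuples B) ^ Fintype.card (ι ⊕ ι) ≤ ∏ i, #(balancedTuples fun _ : ι ⊕ ι => B i) :=
  let ⟨_, _, _, hχ⟩ := exists_detectsZeroOn _
  hχ.card_balancedTuples_pow_le

theorem card_balancedTuples_const (k : ℕ) (A : Finset ℚ) :
    #(balancedTuples fun _ : Fin k ⊕ Fin k => A) = addEnergy k A := by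
  refine card_equiv (Equiv.sumArrowEquivProdArrow _ _ _) fun x => ?_
  simp [mem_balancedTuples, imbalance, sub_eq_zero, Equiv.sumArrowEquivProdArrow]

theorem card_balancedTuples_ite_pow_le (A B : Finset ℚ) {P : Finset (Fin k ⊕ Fin k)}
    (hP : #P = 2) :
    #(balancedTuples fun i => if i ∈ P then B else A) ^ (2 * k) ≤
      addEnergy k B ^ 2 * addEnergy k A ^ (2 * k - 2) := by
  have hcompl : #Pᶜ = 2 * k - 2 := by
    rw [card_compl, hP, Fintype.card_sum, Fintype.card_fin, two_mul]
  have h := card_balancedTuples_pow_le_prod fun i => if i ∈ P then B else A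
  simpa only [card_balancedTuples_const, apply_ite (addEnergy k), prod_ite, prod_const,
    filter_univ_mem, filter_notMem_eq_sdiff, ← compl_eq_univ_sdiff, hP, hcompl, Fintype.card_sum,
    Fintype.card_fin, ← two_mul] using h

theorem card_balancedTuples_ite_le (hk : k ≠ 0) (A B : Finset ℚ) {P : Finset (Fin k ⊕ Fin k)}
    (hP : #P = 2) :
    (#(balancedTuples fun i => if i ∈ P then B else A) : ℝ) ≤
      (addEnergy k B : ℝ) ^ (k : ℝ)⁻¹ * (addEnergy k A : ℝ) ^ (1 - (k : ℝ)⁻¹) := by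
  have hk' : (k : ℝ) ≠ 0 := by exact_mod_cast hk
  refine le_of_pow_le_pow_left₀ (n := 2 * k) (by omega) (by positivity) ?_
  have h : (#(balancedTuples fun i => if i ∈ P then B else A) : ℝ) ^ (2 * k) ≤
      (addEnergy k B : ℝ) ^ 2 * (addEnergy k A : ℝ) ^ (2 * k - 2) := by
    exact_mod_cast card_balancedTuples_ite_pow_le A B hP
  refine h.trans_eq ?_
  rw [mul_pow, ← Real.rpow_mul_natCast (Nat.cast_nonneg _), ← Real.rpow_mul_natCast
    (Nat.cast_nonneg _), ← Real.rpow_natCast, ← Real.rpow_natCast, Nat.cast_sub (by omega)]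
  congr 2 <;> push_cast <;> field_simp

theorem rpow_le_of_le_mul_rpow_one_sub {x c t : ℝ} (hx : 0 ≤ x) (hc : 0 ≤ c) (ht : t ≠ 0)
    (h : x ≤ c * x ^ (1 - t)) : x ^ t ≤ c := by
  rcases hx.eq_or_lt with rfl | hx
  · rwa [Real.zero_rpow ht]
  refine le_of_mul_le_mul_right ?_ (Real.rpow_pos_of_pos hx (1 - t))
  rwa [← Real.rpow_add hx, add_sub_cancel, Real.rpow_one]

theorem card_powersetCard_two_sum (k : ℕ) :
    (#(powersetCard 2 (univ : Finset (Fin k ⊕ Fin k))) : ℝ) = 2 * k ^ 2 - k := by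
  rw [card_powersetCard, card_univ, Fintype.card_sum, Fintype.card_fin, Nat.cast_choose_two]
  push_cast
  ring

theorem balancedTuples_subset_biUnion {α : Type*} [DecidableEq α] {A : Finset ℚ} {f : ℚ → α}
    (hf : ∀ x ∈ balancedTuples fun _ : Fin k ⊕ Fin k => A, ∃ i j, i ≠ j ∧ f (x i) = f (x j)) :
    (balancedTuples fun _ : Fin k ⊕ Fin k => A) ⊆
      (powersetCard 2 univ).biUnion fun P => (A.image f).biUnion fun c =>
        balancedTuples fun i => if i ∈ P then {a ∈ A | f a = c} else A := by
  intro x hx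
  obtain ⟨i, j, hij, hfx⟩ := hf x hx
  obtain ⟨hxA, hsum⟩ := mem_balancedTuples.1 hx
  simp only [mem_biUnion, mem_balancedTuples]
  refine ⟨{i, j}, mem_powersetCard.2 ⟨subset_univ _, card_pair hij⟩, f (x i),
    mem_image_of_mem f (hxA i), fun l => ?_, hsum⟩
  split_ifs with hl
  · rcases mem_insert.1 hl with rfl | hl
    · exact mem_filter.2 ⟨hxA l, rfl⟩
    · rw [mem_singleton.1 hl]
      exact mem_filter.2 ⟨hxA j, hfx.symm⟩
  · exact hxA l

theorem addEnergy_rpow_inv_le_sum_of_forall_exists_eq {α : Type*} [DecidableEq α] (hk : k ≠ 0)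
    {A : Finset ℚ} {f : ℚ → α}
    (hf : ∀ x ∈ balancedTuples fun _ : Fin k ⊕ Fin k => A, ∃ i j, i ≠ j ∧ f (x i) = f (x j)) :
    (addEnergy k A : ℝ) ^ (k : ℝ)⁻¹ ≤ (2 * (k : ℝ) ^ 2 - k) *
      ∑ c ∈ A.image f, (addEnergy k {a ∈ A | f a = c} : ℝ) ^ (k : ℝ)⁻¹ := by
  rw [← card_powersetCard_two_sum]
  refine rpow_le_of_le_mul_rpow_one_sub (by positivity) (by positivity) (by positivity) ?_
  calc (addEnergy k A : ℝ)
    _ ≤ ∑ P ∈ powersetCard 2 (univ : Finset (Fin k ⊕ Fin k)), ∑ c ∈ A.image f,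
        (#(balancedTuples fun i => if i ∈ P then {a ∈ A | f a = c} else A) : ℝ) := by
      rw [← card_balancedTuples_const]
      exact_mod_cast (card_le_card (balancedTuples_subset_biUnion hf)).trans
        (card_biUnion_le.trans (sum_le_sum fun _ _ => card_biUnion_le))
    _ ≤ ∑ _ ∈ powersetCard 2 (univ : Finset (Fin k ⊕ Fin k)), ∑ c ∈ A.image f,
        (addEnergy k {a ∈ A | f a = c} : ℝ) ^ (k : ℝ)⁻¹ *
          (addEnergy k A : ℝ) ^ (1 - (k : ℝ)⁻¹) :=
      sum_le_sum fun _ hP => sum_le_sum fun c _ =>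
        card_balancedTuples_ite_le hk A _ (mem_powersetCard.1 hP).2
    _ = _ := by rw [sum_const, nsmul_eq_mul, ← sum_mul, mul_assoc]

theorem addEnergy_rpow_inv_le_sum_padicValRat (hk : k ≠ 0) {A : Finset ℚ} (hA0 : (0 : ℚ) ∉ A)
    (p : ℕ) [Fact p.Prime] :
    (addEnergy k A : ℝ) ^ (k : ℝ)⁻¹ ≤ (2 * (k : ℝ) ^ 2 - k) *
      ∑ j ∈ A.image (padicValRat p),
        (addEnergy k {a ∈ A | padicValRat p a = j} : ℝ) ^ (k : ℝ)⁻¹ := by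
  have : Nonempty (Fin k ⊕ Fin k) := ⟨.inl ⟨0, Nat.pos_of_ne_zero hk⟩⟩
  refine addEnergy_rpow_inv_le_sum_of_forall_exists_eq hk fun x hx => ?_
  obtain ⟨hxA, hsum⟩ := mem_balancedTuples.1 hx
  exact exists_padicValRat_eq_of_imbalance_eq_zero p
    (fun i => ne_of_mem_of_not_mem (hxA i) hA0) hsum

theorem addEnergy_le_card_pow (k : ℕ) (A : Finset ℚ) : addEnergy k A ≤ #A ^ (2 * k) :=
  (card_filter_le _ _).trans_eq <| by simp [Fintype.card_piFinset, two_mul, pow_add]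

theorem addEnergy_rpow_inv_le_card_sq (hk : k ≠ 0) (A : Finset ℚ) :
    (addEnergy k A : ℝ) ^ (k : ℝ)⁻¹ ≤ (#A : ℝ) ^ 2 := by
  rw [← Real.pow_rpow_inv_natCast (x := (#A : ℝ) ^ 2) (by positivity) hk, ← pow_mul]
  gcongr
  exact_mod_cast addEnergy_le_card_pow k A

theorem six_le_two_mul_sq_sub (hk : 2 ≤ k) : (6 : ℝ) ≤ 2 * k ^ 2 - k := by
  have : (2 : ℝ) ≤ k := by exact_mod_cast hk
  nlinarith

theorem addEnergy_rpow_inv_le_of_card_le (hk : k ≠ 0) {A : Finset ℚ} {c : ℝ} (hA : #A ≤ c) :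
    (addEnergy k A : ℝ) ^ (k : ℝ)⁻¹ ≤ c * #A :=
  (addEnergy_rpow_inv_le_card_sq hk A).trans (by rw [sq]; gcongr)

theorem addEnergy_rpow_inv_le_of_mulDim_lt (hk : 2 ≤ k) {A : Finset ℚ} (hA0 : (0 : ℚ) ∉ A)
    {K : ℕ} (hK : mulDim A < K) :
    (addEnergy k A : ℝ) ^ (k : ℝ)⁻¹ ≤ (2 * (k : ℝ) ^ 2 - k) ^ K * #A := by
  have hC := six_le_two_mul_sq_sub hk
  induction K generalizing A with
  | zero => exact absurd hK (Nat.not_lt_zero _)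
  | succ K ih =>
    by_cases hconst : ∀ a ∈ A, ∀ b ∈ A, primeVal a = primeVal b
    · have hcard : (#A : ℝ) ≤ 2 := by exact_mod_cast card_le_two_of_primeVal_eq hA0 hconst
      refine addEnergy_rpow_inv_le_of_card_le (by omega) (hcard.trans ?_)
      exact (by linarith : (2 : ℝ) ≤ 2 * (k : ℝ) ^ 2 - k).trans
        (le_self_pow₀ (by linarith) K.succ_ne_zero)
    simp only [primeVal_eq_primeVal_iff] at hconst
    push Not at hconst
    obtain ⟨a, ha, b, hb, p, hp, hab⟩ := hconst
    calc (addEnergy k A : ℝ) ^ (k : ℝ)⁻¹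
      _ ≤ (2 * (k : ℝ) ^ 2 - k) * ∑ j ∈ A.image (padicValRat p),
          (addEnergy k {a ∈ A | padicValRat p a = j} : ℝ) ^ (k : ℝ)⁻¹ :=
        addEnergy_rpow_inv_le_sum_padicValRat (by omega) hA0 p
      _ ≤ (2 * (k : ℝ) ^ 2 - k) * ∑ j ∈ A.image (padicValRat p),
          (2 * (k : ℝ) ^ 2 - k) ^ K * #{a ∈ A | padicValRat p a = j} := by
        refine mul_le_mul_of_nonneg_left (sum_le_sum fun j _ => ?_) (by linarith)
        exact ih (fun h => hA0 (mem_filter.1 h).1)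
          ((mulDim_filter_padicValRat_eq_lt ha hb hab j).trans_le (Nat.le_of_lt_succ hK))
      _ = (2 * (k : ℝ) ^ 2 - k) ^ (K + 1) * #A := by
        rw [← mul_sum, card_eq_sum_card_image (padicValRat p) A, Nat.cast_sum]
        ring

theorem mul_succ_le_six_pow (K : ℕ) : K * (K + 1) ≤ 6 ^ K := by
  induction K with
  | zero => simp
  | succ n ih =>
    rw [pow_succ]
    nlinarith [Nat.one_le_pow n 6 (by norm_num)]

theorem addEnergy_rpow_inv_le_of_card_mul_self_le (hk : 2 ≤ k) {A : Finset ℚ}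
    (hA0 : (0 : ℚ) ∉ A) {K : ℕ} (hAA : #(A * A) ≤ K * #A) :
    (addEnergy k A : ℝ) ^ (k : ℝ)⁻¹ ≤ (2 * (k : ℝ) ^ 2 - k) ^ K * #A := by
  rcases le_or_gt #A (K * (K + 1)) with hA | hA
  · have hcard : (#A : ℝ) ≤ 6 ^ K := by exact_mod_cast hA.trans (mul_succ_le_six_pow K)
    exact addEnergy_rpow_inv_le_of_card_le (by omega) <|
      hcard.trans (pow_le_pow_left₀ (by norm_num) (six_le_two_mul_sq_sub hk) K)
  · exact addEnergy_rpow_inv_le_of_mulDim_lt hk hA0 (mulDim_lt_of_card_mul_self_le hA0 hAA hA)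

end Energy

theorem chang_additive_energy_bound
    (A : Finset ℚ) (hA0 : (0 : ℚ) ∉ A)
    (K : ℕ) (hK : 0 < K) (hAA : (A * A).card ≤ K * A.card)
    (k : ℕ) (hk : 2 ≤ k) :
    (addEnergy k A : ℝ) ≤ (A.card : ℝ) ^ k * (2 * (k : ℝ) ^ 2 - (k : ℝ)) ^ (k * K) := by
  calc (addEnergy k A : ℝ)
    _ = ((addEnergy k A : ℝ) ^ (k : ℝ)⁻¹) ^ k :=
      (Real.rpow_inv_natCast_pow (Nat.cast_nonneg _) (by omega)).symm
    _ ≤ ((2 * (k : ℝ) ^ 2 - k) ^ K * #A) ^ k := by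
      gcongr
      exact addEnergy_rpow_inv_le_of_card_mul_self_le hk hA0 hAA
    _ = (A.card : ℝ) ^ k * (2 * (k : ℝ) ^ 2 - (k : ℝ)) ^ (k * K) := by ring
end

section
/- (Garaev–Shen) There exists an absolute constant c > 0 such that for every finite set A of real numbers, max{|AA|, |(A+1)(A+1)|} ≥ c |A|^{5/4}. -/
open Finset Pointwise

/-!
The argument is elementary double counting. Enumerate `A` increasingly as `a₀ < ⋯ < a_N`. For
nonzero `b ∈ A`, the dilate `b * aᵢ` runs monotonically through `T = A * A`, so its steps in rank
inside `T` add up to at most `|T|`, and at least three quarters of them are of size at most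
`4 |T| / N`. The same holds for `c * (aᵢ + 1)` inside `U = (A + 1) * (A + 1)`, for nonzero
`c ∈ A + 1`. Hence for at least half of the indices `i` both steps are short, and the two steps
together determine `b`, `c` and `i`. As there are `O(|T|² / N)` short steps in `T` and
`O(|U|² / N)` in `U`, this gives `|A|² * N ≪ |T|² |U|² / N²`.
-/

section TotalVariation

variable {G : Type*} [AddCommGroup G] [LinearOrder G] [IsOrderedAddMonoid G] {N : ℕ}
  {f : Fin (N + 1) → G}

lemma sum_abs_sub_of_monotone (hf : Monotone f) :
    ∑ i : Fin N, |f i.succ - f i.castSucc| = |f (Fin.last N) - f 0| := by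
  induction N with
  | zero => simp
  | succ N ih =>
    have hinit := ih (hf.comp Fin.strictMono_castSucc.monotone)
    rw [Fin.sum_univ_castSucc]
    simp only [Function.comp_apply, Fin.castSucc_zero] at hinit
    simp only [Fin.succ_castSucc, Fin.succ_last, hinit]
    rw [abs_of_nonneg (sub_nonneg.2 (hf (Fin.zero_le _))),
      abs_of_nonneg (sub_nonneg.2 (hf (Fin.le_last _))),
      abs_of_nonneg (sub_nonneg.2 (hf (Fin.zero_le _)))]
    abel

lemma sum_abs_sub_of_antitone (hf : Antitone f) :
    ∑ i : Fin N, |f i.succ - f i.castSucc| = |f (Fin.last N) - f 0| := by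
  simpa only [Pi.neg_apply, neg_sub_neg, abs_sub_comm] using sum_abs_sub_of_monotone hf.neg

end TotalVariation

section Rank

variable {α : Type*} [LinearOrder α] {T : Finset α} {x y : α}

/-- The rank of `x` relative to the finite set `T`, that is, the number of elements of `T` below
`x`. It is an integer so that rank differences are not truncated. -/
def rankIn (T : Finset α) (x : α) : ℤ := #{t ∈ T | t < x}

lemma rankIn_monotone (T : Finset α) : Monotone (rankIn T) := fun _ _ hxy =>
  Int.ofNat_le.2 (card_le_card (monotone_filter_right T fun _ _ ht => ht.trans_le hxy))

lemma rankIn_strictMonoOn (T : Finset α) : StrictMonoOn (rankIn T) T := by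
  intro x hx y _ hxy
  refine Int.ofNat_lt.2 (card_lt_card ((ssubset_iff_of_subset ?_).2 ⟨x, ?_, ?_⟩))
  · exact monotone_filter_right T fun _ _ ht => ht.trans hxy
  · exact mem_filter.2 ⟨hx, hxy⟩
  · simp only [mem_filter, lt_irrefl, and_false, not_false_eq_true]

lemma abs_rankIn_sub_rankIn_le (T : Finset α) (x y : α) : |rankIn T y - rankIn T x| ≤ #T := by
  have hx : rankIn T x ≤ #T := Int.ofNat_le.2 (card_filter_le _ _)
  have hy : rankIn T y ≤ #T := Int.ofNat_le.2 (card_filter_le _ _)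
  exact abs_sub_le_of_nonneg_of_le (Int.natCast_nonneg _) hy (Int.natCast_nonneg _) hx

/-- The ordered pairs of distinct elements of `T` whose ranks in `T` differ by at most `m`. -/
def closePairs (T : Finset α) (m : ℕ) : Finset (α × α) :=
  {p ∈ T.offDiag | |rankIn T p.2 - rankIn T p.1| ≤ m}

lemma mem_closePairs {m : ℕ} : (x, y) ∈ closePairs T m ↔
    x ∈ T ∧ y ∈ T ∧ x ≠ y ∧ |rankIn T y - rankIn T x| ≤ m := by
  simp only [closePairs, mem_filter, mem_offDiag, and_assoc]

lemma card_closePairs_le (T : Finset α) (m : ℕ) : #(closePairs T m) ≤ #T * (2 * m) := by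
  have hcard : #((Icc (-m : ℤ) m).erase 0) = 2 * m := by
    rw [card_erase_of_mem (by simp), Int.card_Icc]
    lia
  rw [← hcard, ← card_product]
  refine card_le_card_of_injOn (fun p => (p.1, rankIn T p.2 - rankIn T p.1)) ?_ ?_
  · rintro ⟨x, y⟩ hxy
    obtain ⟨hx, hy, hne, hle⟩ := mem_closePairs.1 hxy
    refine mem_product.2 ⟨hx, mem_erase.2 ⟨?_, mem_Icc.2 (abs_le.1 hle)⟩⟩
    exact sub_ne_zero.2 fun h => hne ((rankIn_strictMonoOn T).injOn hx hy h.symm)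
  · rintro ⟨x, y⟩ hxy ⟨x', y'⟩ hxy' h
    obtain ⟨rfl, hrank⟩ := Prod.mk.inj h
    obtain ⟨-, hy, -⟩ := mem_closePairs.1 hxy
    obtain ⟨-, hy', -⟩ := mem_closePairs.1 hxy'
    rw [(rankIn_strictMonoOn T).injOn hy hy' (sub_left_injective hrank)]

lemma mul_card_closePairs_div_le (T : Finset α) (N : ℕ) :
    N * #(closePairs T (4 * #T / N)) ≤ 8 * #T ^ 2 :=
  calc N * #(closePairs T (4 * #T / N)) ≤ N * (#T * (2 * (4 * #T / N))) := by
        gcongr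
        exact card_closePairs_le T _
    _ = 2 * #T * (N * (4 * #T / N)) := by ring
    _ ≤ 2 * #T * (4 * #T) := Nat.mul_le_mul_left _ (Nat.mul_div_le _ _)
    _ = 8 * #T ^ 2 := by ring

variable {N : ℕ} {f : Fin (N + 1) → α}

lemma sum_abs_rankIn_sub_le (hf : Monotone f ∨ Antitone f) :
    ∑ i : Fin N, |rankIn T (f i.succ) - rankIn T (f i.castSucc)| ≤ #T := by
  refine le_of_eq_of_le ?_ (abs_rankIn_sub_rankIn_le T (f 0) (f (Fin.last N)))
  rcases hf with hf | hf
  · exact sum_abs_sub_of_monotone ((rankIn_monotone T).comp hf)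
  · exact sum_abs_sub_of_antitone ((rankIn_monotone T).comp_antitone hf)

/-- The pair of consecutive terms of the sequence `f` at `i`; recording two terms rather than one is
what lets a dilation factor be recovered from its values. -/
def consecutivePair (f : Fin (N + 1) → α) (i : Fin N) : α × α := (f i.castSucc, f i.succ)

lemma succ_mul_card_notMem_closePairs_le (hf : StrictMono f ∨ StrictAnti f) (hfT : ∀ i, f i ∈ T)
    (m : ℕ) : (m + 1) * #{i : Fin N | consecutivePair f i ∉ closePairs T m} ≤ #T := by
  have hinj : Function.Injective f := hf.elim StrictMono.injective StrictAnti.injective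
  have hjump : ∀ i ∈ ({i : Fin N | consecutivePair f i ∉ closePairs T m} : Finset (Fin N)),
      (m + 1 : ℤ) ≤ |rankIn T (f i.succ) - rankIn T (f i.castSucc)| := by
    intro i hi
    have hnot := (mem_filter.1 hi).2
    contrapose! hnot
    exact mem_closePairs.2
      ⟨hfT _, hfT _, hinj.ne i.castSucc_lt_succ.ne, Int.lt_add_one_iff.1 hnot⟩
  have hsum := calc
    _ = #{i : Fin N | consecutivePair f i ∉ closePairs T m} • (m + 1 : ℤ) := by
      rw [nsmul_eq_mul, mul_comm]
    _ ≤ _ := card_nsmul_le_sum _ _ _ hjump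
    _ ≤ ∑ i : Fin N, |rankIn T (f i.succ) - rankIn T (f i.castSucc)| :=
      sum_le_univ_sum_of_nonneg fun _ => abs_nonneg _
    _ ≤ #T := sum_abs_rankIn_sub_le (hf.imp StrictMono.monotone StrictAnti.antitone)
  exact_mod_cast hsum

lemma four_mul_card_notMem_closePairs_div_le (hf : StrictMono f ∨ StrictAnti f)
    (hfT : ∀ i, f i ∈ T) :
    4 * #{i : Fin N | consecutivePair f i ∉ closePairs T (4 * #T / N)} ≤ N := by
  rcases N.eq_zero_or_pos with rfl | hN
  · simp
  set m := 4 * #T / N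
  refine Nat.le_of_mul_le_mul_left ?_ m.succ_pos
  calc (m + 1) * (4 * #{i : Fin N | consecutivePair f i ∉ closePairs T m})
      = 4 * ((m + 1) * #{i : Fin N | consecutivePair f i ∉ closePairs T m}) := by ring
    _ ≤ 4 * #T := Nat.mul_le_mul_left 4 (succ_mul_card_notMem_closePairs_le hf hfT m)
    _ ≤ N * (m + 1) := (Nat.lt_mul_div_succ (4 * #T) hN).le
    _ = (m + 1) * N := Nat.mul_comm _ _

end Rank

lemma card_le_two_mul_card_filter_and {ι : Type*} [Fintype ι] {p q : ι → Prop} [DecidablePred p]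
    [DecidablePred q] (hp : 4 * #{i | ¬ p i} ≤ Fintype.card ι)
    (hq : 4 * #{i | ¬ q i} ≤ Fintype.card ι) :
    Fintype.card ι ≤ 2 * #{i | p i ∧ q i} := by
  classical
  have hcover : (univ : Finset ι) ⊆
      ({i | p i ∧ q i} : Finset ι) ∪ (({i | ¬ p i} : Finset ι) ∪ ({i | ¬ q i} : Finset ι)) := by
    intro i _
    simp only [mem_union, mem_filter_univ]
    tauto
  have hcard : Fintype.card ι ≤ #{i | p i ∧ q i} + (#{i | ¬ p i} + #{i | ¬ q i}) :=
    (card_le_card hcover).trans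
      ((card_union_le _ _).trans (Nat.add_le_add_left (card_union_le _ _) _))
  lia

theorem card_mul_card_mul_pow_three_le_of_injective {α β ι κ : Type*} [LinearOrder α]
    [LinearOrder β] [Fintype ι] [Fintype κ] {T : Finset α} {U : Finset β} {N : ℕ}
    {f : ι → Fin (N + 1) → α} {g : κ → Fin (N + 1) → β}
    (hf : ∀ s, StrictMono (f s) ∨ StrictAnti (f s)) (hfT : ∀ s i, f s i ∈ T)
    (hg : ∀ t, StrictMono (g t) ∨ StrictAnti (g t)) (hgU : ∀ t i, g t i ∈ U)
    (hinj : Function.Injective fun x : (ι × κ) × Fin N =>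
      (consecutivePair (f x.1.1) x.2, consecutivePair (g x.1.2) x.2)) :
    Fintype.card ι * Fintype.card κ * N ^ 3 ≤ 128 * (#T * #U) ^ 2 := by
  set P := closePairs T (4 * #T / N)
  set Q := closePairs U (4 * #U / N)
  let isGood (st : ι × κ) (i : Fin N) : Prop :=
    consecutivePair (f st.1) i ∈ P ∧ consecutivePair (g st.2) i ∈ Q
  have hmany (st : ι × κ) : N ≤ 2 * #{i : Fin N | isGood st i} := by
    have h := card_le_two_mul_card_filter_and (ι := Fin N)
      (p := fun i => consecutivePair (f st.1) i ∈ P) (q := fun i => consecutivePair (g st.2) i ∈ Q)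
    rw [Fintype.card_fin] at h
    exact h (four_mul_card_notMem_closePairs_div_le (hf _) (hfT _))
      (four_mul_card_notMem_closePairs_div_le (hg _) (hgU _))
  have hfew : ∑ st : ι × κ, #{i : Fin N | isGood st i} ≤ #P * #Q := by
    rw [← card_product, ← card_sigma]
    refine card_le_card_of_injOn (fun x => _) ?_
      (hinj.comp (Equiv.sigmaEquivProd (ι × κ) (Fin N)).injective).injOn
    intro x hx
    exact mem_product.2 (mem_filter.1 (mem_sigma.1 hx).2).2
  have hcount : Fintype.card ι * Fintype.card κ * N ≤ 2 * (#P * #Q) := calc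
    _ = ∑ _st : ι × κ, N := by
      rw [sum_const, card_univ, Fintype.card_prod, smul_eq_mul]
    _ ≤ ∑ st : ι × κ, 2 * #{i : Fin N | isGood st i} := sum_le_sum fun st _ => hmany st
    _ ≤ 2 * (#P * #Q) := by
      rw [← mul_sum]
      exact Nat.mul_le_mul_left 2 hfew
  calc Fintype.card ι * Fintype.card κ * N ^ 3
      = Fintype.card ι * Fintype.card κ * N * N ^ 2 := by ring
    _ ≤ 2 * (#P * #Q) * N ^ 2 := by gcongr
    _ = 2 * (N * #P) * (N * #Q) := by ring
    _ ≤ 2 * (8 * #T ^ 2) * (8 * #U ^ 2) :=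
      Nat.mul_le_mul (Nat.mul_le_mul_left 2 (mul_card_closePairs_div_le T N))
        (mul_card_closePairs_div_le U N)
    _ = 128 * (#T * #U) ^ 2 := by ring

section Dilations

lemma strictMono_or_strictAnti_mul_left {R : Type*} [Ring R] [LinearOrder R] [IsStrictOrderedRing R]
    {b : R} (hb : b ≠ 0) :
    StrictMono (b * ·) ∨ StrictAnti (b * ·) :=
  hb.gt_or_lt.imp strictMono_mul_left_of_pos strictAnti_mul_left

variable {R : Type*} [CommRing R]

lemma eq_and_eq_and_eq_of_dilations_eq [NoZeroDivisors R] {b c x y b' c' x' y' d : R} (hb : b ≠ 0)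
    (hc : c ≠ 0) (hd : d ≠ 0) (hxy : x ≠ y) (hbx : b * x = b' * x') (hby : b * y = b' * y')
    (hcx : c * (x + d) = c' * (x' + d)) (hcy : c * (y + d) = c' * (y' + d)) :
    b = b' ∧ c = c' ∧ x = x' := by
  have hcross : b * c' = b' * c := by
    apply mul_right_cancel₀ (sub_ne_zero.2 hxy)
    linear_combination c' * (hbx - hby) - b' * (hcx - hcy)
  have hbb : b = b' := by
    apply mul_right_cancel₀ (mul_ne_zero hc hd)
    linear_combination b * hcx - c * hbx + (x' + d) * hcross
  subst hbb
  obtain rfl : c = c' := (mul_left_cancel₀ hb hcross).symm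
  exact ⟨rfl, rfl, mul_left_cancel₀ hb hbx⟩

variable [LinearOrder R] [IsStrictOrderedRing R]

theorem card_mul_card_mul_pow_three_le {A B C : Finset R} {N : ℕ} {d : R} (hA : #A = N + 1)
    (hB : 0 ∉ B) (hC : 0 ∉ C) (hd : d ≠ 0) :
    #B * #C * N ^ 3 ≤ 128 * (#(B * A) * #(C * A.image (· + d))) ^ 2 := by
  let a := A.orderEmbOfFin hA
  have hbne (b : B) : (b : R) ≠ 0 := ne_of_mem_of_not_mem b.2 hB
  have hcne (c : C) : (c : R) ≠ 0 := ne_of_mem_of_not_mem c.2 hC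
  have haA (i) : a i ∈ A := orderEmbOfFin_mem A hA i
  have hshift : StrictMono fun i => a i + d := a.strictMono.add_const d
  rw [← Fintype.card_coe B, ← Fintype.card_coe C]
  refine card_mul_card_mul_pow_three_le_of_injective
    (f := fun (b : B) i => b * a i) (g := fun (c : C) i => c * (a i + d))
    (fun b => (strictMono_or_strictAnti_mul_left (hbne b)).imp
      (·.comp a.strictMono) (·.comp_strictMono a.strictMono))
    (fun b i => mul_mem_mul b.2 (haA i))
    (fun c => (strictMono_or_strictAnti_mul_left (hcne c)).imp
      (·.comp hshift) (·.comp_strictMono hshift))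
    (fun c i => mul_mem_mul c.2 (mem_image_of_mem _ (haA i))) ?_
  rintro ⟨⟨b, c⟩, i⟩ ⟨⟨b', c'⟩, j⟩ h
  simp only [consecutivePair, Prod.mk.injEq] at h
  obtain ⟨⟨hbx, hby⟩, hcx, hcy⟩ := h
  obtain ⟨hb, hc, hx⟩ := eq_and_eq_and_eq_of_dilations_eq (hbne b) (hcne c) hd
    (a.injective.ne i.castSucc_lt_succ.ne) hbx hby hcx hcy
  rw [Subtype.ext hb, Subtype.ext hc, Fin.castSucc_injective N (a.injective hx)]

theorem card_pow_five_le (A : Finset R) {d : R} (hd : d ≠ 0) :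
    #A ^ 5 ≤ 8 ^ 4 * (#(A * A) * #(A.image (· + d) * A.image (· + d))) ^ 2 := by
  rcases A.eq_empty_or_nonempty with rfl | hA
  · simp
  set S := A.image (· + d)
  have hS : #S = #A := card_image_of_injective A (add_left_injective d)
  obtain ⟨N, hN⟩ : ∃ N, #A = N + 1 := Nat.exists_eq_add_one.2 hA.card_pos
  rcases N.eq_zero_or_pos with rfl | hNpos
  · have hAA : 0 < #(A * A) := (hA.mul hA).card_pos
    have hSS : 0 < #(S * S) := ((hA.image _).mul (hA.image _)).card_pos
    rw [hN, zero_add, one_pow]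
    exact Nat.succ_le_of_lt (by positivity)
  have hAerase : N ≤ #(A.erase 0) := by
    simpa only [hN, Nat.add_sub_cancel] using pred_card_le_card_erase (s := A) (a := 0)
  have hSerase : N ≤ #(S.erase 0) := by
    simpa only [hS, hN, Nat.add_sub_cancel] using pred_card_le_card_erase (s := S) (a := 0)
  calc #A ^ 5 ≤ (2 * N) ^ 5 := by gcongr; lia
    _ = 32 * (N * N * N ^ 3) := by ring
    _ ≤ 32 * (#(A.erase 0) * #(S.erase 0) * N ^ 3) := by gcongr
    _ ≤ 32 * (128 * (#(A.erase 0 * A) * #(S.erase 0 * S)) ^ 2) :=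
      Nat.mul_le_mul_left 32
        (card_mul_card_mul_pow_three_le hN (notMem_erase 0 A) (notMem_erase 0 S) hd)
    _ = 8 ^ 4 * (#(A.erase 0 * A) * #(S.erase 0 * S)) ^ 2 := by ring
    _ ≤ 8 ^ 4 * (#(A * A) * #(S * S)) ^ 2 := by
      gcongr
      exacts [erase_subset 0 A, erase_subset 0 S]

theorem garaev_shen_general (A : Finset R) {d : R} (hd : d ≠ 0) :
    1 / 8 * (#A : ℝ) ^ (5 / 4 : ℝ) ≤
      max (#(A * A) : ℝ) (#(A.image (· + d) * A.image (· + d)) : ℝ) := by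
  set K := max (#(A * A) : ℝ) (#(A.image (· + d) * A.image (· + d)) : ℝ)
  have hK : 0 ≤ K := le_max_of_le_left (Nat.cast_nonneg _)
  suffices (#A : ℝ) ^ (5 / 4 : ℝ) ≤ 8 * K by linarith
  refine le_of_pow_le_pow_left₀ four_ne_zero (by positivity) ?_
  calc ((#A : ℝ) ^ (5 / 4 : ℝ)) ^ 4 = (#A : ℝ) ^ 5 := by
        rw [← Real.rpow_mul_natCast (Nat.cast_nonneg _), ← Real.rpow_natCast]
        norm_num
    _ ≤ 8 ^ 4 * (#(A * A) * #(A.image (· + d) * A.image (· + d)) : ℝ) ^ 2 := by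
      exact_mod_cast card_pow_five_le A hd
    _ ≤ 8 ^ 4 * (K * K) ^ 2 := by
      gcongr
      exacts [le_max_left _ _, le_max_right _ _]
    _ = (8 * K) ^ 4 := by ring

end Dilations

theorem garaev_shen :
    ∃ c : ℝ, 0 < c ∧ ∀ A : Finset ℝ,
      c * (A.card : ℝ) ^ (5 / 4 : ℝ) ≤
        max ((A * A).card : ℝ)
          (((A.image fun a => a + 1) * (A.image fun a => a + 1)).card : ℝ) :=
  ⟨1 / 8, by norm_num, fun A => garaev_shen_general A one_ne_zero⟩
end
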